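/- arXiv:1704.00719 — 2 statements merged into one kernel-verified Lean document; each statement's English description precedes it below -/
import Mathlib

section
/- Let R = S ×_k T be a non-trivial fiber product of commutative noetherian local rings S and T with common residue field k (so S ≠ k ≠ T). Let M and N be finitely generated R-modules. If Tor_ℓ^R(M, N) = 0 = Tor_{ℓ+1}^R(M, N) for some ℓ ≥ 5, then pd_R M ≤ 1 or pd_R N ≤ 1. -/
/-!
The only property of `R = S ×ₖ T` that matters is that its maximal ideal is a direct sum
`𝔪 = I ⊕ J` of two nonzero ideals, `I = 𝔪_S` and `J = 𝔪_T`, so that `IJ = 0`.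

Write `Ωⁿ` for minimal syzygies. A second syzygy `Ω²M = ker (F₁ → F₀)` lies in
`𝔪F₁ = IF₁ ⊕ JF₁` and splits accordingly, so if it is nonzero it has a minimal generator killed by
`I` or by `J` (`exists_generator_syz_two`). A minimal generator of a module `X` killed by `J` makes
`J` a direct summand of `ΩX` (`isDirectSummand_ker_of_smul_eq_zero`). A minimal generator of such a
summand `J` is killed by `I`, so `I` is a summand of the next syzygy, and so on: if `Ω²M ≠ 0`,
then `I` and `J` alternate as summands of `Ω³M, Ω⁴M, …`
(`isDirectSummand_syz_alternate`). In particular a module with some vanishing syzygy has `Ω² = 0`,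
that is, projective dimension at most one.

Suppose `Tor_ℓ(M, N) = Tor_{ℓ+1}(M, N) = 0` with `ℓ ≥ 5` and `Ω²M ≠ 0`. By dimension shifting,
`Tor₁(Ω³M, Ω^{ℓ-4}N) = Tor₁(Ω⁴M, Ω^{ℓ-4}N) = 0`. One of `Ω³M`, `Ω⁴M` has the summand `I`, the other
has the summand `J`, so `Tor₁(𝔪, Ω^{ℓ-4}N) = 0`. Then `Tor₁(k, Ω^{ℓ-3}N) = 0`, hence
`Ω^{ℓ-2}N = 0` by Nakayama's lemma, and therefore `Ω²N = 0`.

Only vanishing of `Tor₁` enters the argument (`Tor1Zero`). Its symmetry, and the possibility of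
moving syzygies from one argument to the other (`tor1Zero_shift`), come from the snake lemma;
`tor1Zero_syz_of_subsingleton_tor` links it with the derived functor `Tor`.
-/

universe u

open IsLocalRing CategoryTheory

/-- A minimal free resolution of the module `M` over the local ring `R`:
`⋯ → R^{rank 2} → R^{rank 1} → R^{rank 0} → M → 0` is exact, and each differential maps into
`𝔪` times the next free module (minimality). -/
structure MinimalFreeResolution (R : Type u) [CommRing R] [IsLocalRing R]
    (M : Type u) [AddCommGroup M] [Module R M] where
  rank : ℕ → ℕ
  aug : (Fin (rank 0) → R) →ₗ[R] M
  d : (i : ℕ) → ((Fin (rank (i + 1)) → R) →ₗ[R] (Fin (rank i) → R))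
  aug_surjective : Function.Surjective aug
  exact_aug : LinearMap.ker aug = LinearMap.range (d 0)
  exact : ∀ i, LinearMap.ker (d i) = LinearMap.range (d (i + 1))
  minimal : ∀ i, LinearMap.range (d i) ≤
    (maximalIdeal R) • (⊤ : Submodule R (Fin (rank i) → R))

/-- `S` is an `i`-th syzygy `Ω^i M` of `M`, i.e. the `i`-th kernel computed from a minimal free
resolution of `M` over the local ring `R` (`Ω⁰M = M`, `Ω¹M = ker aug`, `Ω^{j+2}M = ker (d j)`). -/
def IsNthSyzygy (R : Type u) [CommRing R] [IsLocalRing R] (i : ℕ)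
    (M : Type u) [AddCommGroup M] [Module R M]
    (S : Type u) [AddCommGroup S] [Module R S] : Prop :=
  ∃ F : MinimalFreeResolution R M,
    match i with
    | 0 => Nonempty (S ≃ₗ[R] M)
    | 1 => Nonempty (S ≃ₗ[R] LinearMap.ker F.aug)
    | (j + 2) => Nonempty (S ≃ₗ[R] LinearMap.ker (F.d j))

/-- `pd_R M ≤ n`: a minimal free resolution of `M` vanishes in homological degrees `> n`. -/
def ProjDimLE (R : Type u) [CommRing R] [IsLocalRing R]
    (M : Type u) [AddCommGroup M] [Module R M] (n : ℕ) : Prop :=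
  ∃ F : MinimalFreeResolution R M, ∀ i, n < i → F.rank i = 0

/-- `A` is a direct summand of the `R`-module `X`. -/
def IsDirectSummand (R : Type u) [CommRing R] (A X : Type u)
    [AddCommGroup A] [Module R A] [AddCommGroup X] [Module R X] : Prop :=
  ∃ (ι : A →ₗ[R] X) (π : X →ₗ[R] A), π.comp ι = LinearMap.id


open TensorProduct

/-! ### Vanishing of `Tor₁` -/

/-- `Tor₁^R(X, Y) = 0`, expressed through some short exact sequence `0 → K → F → Y → 0` with `F`
flat: the map `X ⊗ K → X ⊗ F` is injective. -/
def Tor1Zero (R : Type u) [CommRing R] (X Y : Type u) [AddCommGroup X] [Module R X]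
    [AddCommGroup Y] [Module R Y] : Prop :=
  ∃ (K F : ModuleCat.{u} R) (i : K →ₗ[R] F) (p : F →ₗ[R] Y), Module.Flat R F ∧
    Function.Injective i ∧ Function.Exact i p ∧ Function.Surjective p ∧
    Function.Injective (i.lTensor X)

section Tor1

variable {R : Type u} [CommRing R]
variable {X Y K F L G : Type u} [AddCommGroup X] [Module R X] [AddCommGroup Y] [Module R Y]
  [AddCommGroup K] [Module R K] [AddCommGroup F] [Module R F]
  [AddCommGroup L] [Module R L] [AddCommGroup G] [Module R G]

/-- Balancedness of `Tor₁`, in the form of the snake lemma. -/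
lemma rTensor_injective_iff_lTensor_injective [Module.Flat R F] [Module.Flat R G]
    {i : K →ₗ[R] F} {p : F →ₗ[R] Y} {j : L →ₗ[R] G} {q : G →ₗ[R] X}
    (hi : Function.Injective i) (hip : Function.Exact i p) (hp : Function.Surjective p)
    (hj : Function.Injective j) (hjq : Function.Exact j q) (hq : Function.Surjective q) :
    Function.Injective (j.rTensor Y) ↔ Function.Injective (i.lTensor X) := by
  have key (A B C : Type u) [AddCommGroup A] [Module R A] [AddCommGroup B] [Module R B]
      [AddCommGroup C] [Module R C] (h : A →ₗ[R] B) :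
      Function.Injective (h.rTensor C) ↔ Function.Injective (h.lTensor C) := by
    rw [← LinearMap.comm_comp_rTensor_comp_comm_eq]
    simp
  constructor
  · intro h
    exact lTensor_injective_of_exact_of_exact_of_rTensor_injective hjq hq hip hp h
      (Module.Flat.lTensor_preserves_injective_linearMap i hi)
  · intro h
    rw [key]
    exact lTensor_injective_of_exact_of_exact_of_rTensor_injective hip hp hjq hq
      ((key _ _ _ _).2 h) (Module.Flat.lTensor_preserves_injective_linearMap j hj)

variable (R X) in
lemma exists_flat_presentation : ∃ (L G : ModuleCat.{u} R) (j : L →ₗ[R] G) (q : G →ₗ[R] X),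
    Module.Flat R G ∧ Function.Injective j ∧ Function.Exact j q ∧ Function.Surjective q :=
  ⟨.of R (LinearMap.ker (Finsupp.linearCombination R (id : X → X))), .of R (X →₀ R),
    Submodule.subtype _, Finsupp.linearCombination R id,
    inferInstanceAs (Module.Flat R (X →₀ R)), Submodule.subtype_injective _,
    LinearMap.exact_subtype_ker_map _, Finsupp.linearCombination_id_surjective R X⟩

/-- `Tor1Zero` may be tested on any short exact sequence with flat middle term. -/
lemma tor1Zero_iff [Module.Flat R F] {i : K →ₗ[R] F} {p : F →ₗ[R] Y}
    (hi : Function.Injective i) (hip : Function.Exact i p) (hp : Function.Surjective p) :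
    Tor1Zero R X Y ↔ Function.Injective (i.lTensor X) := by
  constructor
  · rintro ⟨K', F', i', p', hF', hi', hip', hp', h⟩
    obtain ⟨L, G, j, q, hG, hj, hjq, hq⟩ := exists_flat_presentation R X
    rw [← rTensor_injective_iff_lTensor_injective hi' hip' hp' hj hjq hq] at h
    rwa [← rTensor_injective_iff_lTensor_injective hi hip hp hj hjq hq]
  · intro h
    exact ⟨.of R K, .of R F, i, p, ‹_›, hi, hip, hp, h⟩

/-- Dimension shifting: a syzygy can be moved from one argument of `Tor₁` to the other. Both
sides say that `L ⊗ K → G ⊗ F` is injective, i.e. that `Tor₂(X, Y)` vanishes. -/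
lemma tor1Zero_shift [Module.Flat R F] [Module.Flat R G]
    {i : K →ₗ[R] F} {p : F →ₗ[R] Y} {j : L →ₗ[R] G} {q : G →ₗ[R] X}
    (hi : Function.Injective i) (hip : Function.Exact i p) (hp : Function.Surjective p)
    (hj : Function.Injective j) (hjq : Function.Exact j q) (hq : Function.Surjective q) :
    Tor1Zero R L Y ↔ Tor1Zero R X K := by
  obtain ⟨B, C, b, c, hC, hb, hbc, hc⟩ := exists_flat_presentation R K
  rw [tor1Zero_iff hi hip hp, tor1Zero_iff hb hbc hc,
    ← rTensor_injective_iff_lTensor_injective hb hbc hc hj hjq hq]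
  have h1 : Function.Injective (j.rTensor F) :=
    Module.Flat.rTensor_preserves_injective_linearMap j hj
  have h2 : Function.Injective (i.lTensor G) :=
    Module.Flat.lTensor_preserves_injective_linearMap i hi
  rw [← h1.of_comp_iff, ← h2.of_comp_iff, ← LinearMap.coe_comp, ← LinearMap.coe_comp,
    LinearMap.rTensor_comp_lTensor, LinearMap.lTensor_comp_rTensor]

lemma Tor1Zero.of_isDirectSummand {A : Type u} [AddCommGroup A] [Module R A]
    (h : Tor1Zero R X Y) (hA : IsDirectSummand R A X) : Tor1Zero R A Y := by
  obtain ⟨K, F, i, p, hF, hi, hip, hp, h⟩ := h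
  obtain ⟨a, b, hab⟩ := hA
  refine ⟨K, F, i, p, hF, hi, hip, hp, ?_⟩
  have h1 : Function.Injective (a.rTensor K) := by
    refine Function.LeftInverse.injective (g := b.rTensor K) fun x => ?_
    rw [← LinearMap.comp_apply, ← LinearMap.rTensor_comp, hab, LinearMap.rTensor_id,
      LinearMap.id_apply]
  have h2 := h.comp h1
  rw [← LinearMap.coe_comp, LinearMap.lTensor_comp_rTensor,
    ← LinearMap.rTensor_comp_lTensor] at h2
  exact Function.Injective.of_comp h2

/-- Additivity of `Tor₁` on the internal direct sum `I ⊔ J = I ⊕ J`. -/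
lemma Tor1Zero.sup {I J : Ideal R} (hIJ : I ⊓ J = ⊥) (hI : Tor1Zero R I Y) (hJ : Tor1Zero R J Y) :
    Tor1Zero R (I ⊔ J : Ideal R) Y := by
  obtain ⟨K, F, i, p, hF, hi, hip, hp, hI⟩ := hI
  rw [tor1Zero_iff hi hip hp] at hJ ⊢
  let s : (I × J) →ₗ[R] (I ⊔ J : Ideal R) :=
    (Submodule.inclusion le_sup_left).coprod (Submodule.inclusion le_sup_right)
  have hs : Function.Bijective s := by
    constructor
    · rw [injective_iff_map_eq_zero]
      rintro ⟨⟨x, hx⟩, ⟨y, hy⟩⟩ h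
      have h' : x + y = 0 := congrArg Subtype.val h
      have hx0 : x ∈ I ⊓ J := ⟨hx, by rw [eq_neg_of_add_eq_zero_left h']; exact J.neg_mem hy⟩
      rw [hIJ, Submodule.mem_bot] at hx0
      subst hx0
      simp only [zero_add] at h'
      subst h'
      rfl
    · rintro ⟨z, hz⟩
      obtain ⟨x, hx, y, hy, rfl⟩ := Submodule.mem_sup.1 hz
      exact ⟨(⟨x, hx⟩, ⟨y, hy⟩), rfl⟩
  let e := LinearEquiv.ofBijective s hs
  rw [injective_iff_map_eq_zero]
  intro v hv
  have hz (A : Ideal R) (π : (I ⊔ J : Ideal R) →ₗ[R] A) (hA : Function.Injective (i.lTensor A)) :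
      π.rTensor K v = 0 := by
    apply hA
    rw [map_zero, ← LinearMap.comp_apply, LinearMap.lTensor_comp_rTensor,
      ← LinearMap.rTensor_comp_lTensor, LinearMap.comp_apply, hv, map_zero]
  have h1 := hz I (LinearMap.fst R I J ∘ₗ e.symm.toLinearMap) hI
  have h2 := hz J (LinearMap.snd R I J ∘ₗ e.symm.toLinearMap) hJ
  have hid : (LinearMap.id : (I ⊔ J : Ideal R) →ₗ[R] (I ⊔ J : Ideal R)) =
      Submodule.inclusion le_sup_left ∘ₗ (LinearMap.fst R I J ∘ₗ e.symm.toLinearMap) +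
      Submodule.inclusion le_sup_right ∘ₗ (LinearMap.snd R I J ∘ₗ e.symm.toLinearMap) := by
    apply LinearMap.ext
    intro z
    exact (e.apply_symm_apply z).symm
  have hv' : v = (LinearMap.id : (I ⊔ J : Ideal R) →ₗ[R] _).rTensor K v := by simp
  rw [hv', hid, LinearMap.rTensor_add, LinearMap.add_apply, LinearMap.rTensor_comp,
    LinearMap.rTensor_comp K (Submodule.inclusion le_sup_right), LinearMap.comp_apply,
    LinearMap.comp_apply, h1, h2, map_zero, map_zero, add_zero]

end Tor1

/-! ### Minimal free covers over a local ring -/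

section Cover

variable {R : Type u} [CommRing R]

lemma mem_smul_top_pi_iff {n : ℕ} (I : Ideal R) (v : Fin n → R) :
    v ∈ I • (⊤ : Submodule R (Fin n → R)) ↔ ∀ i, v i ∈ I := by
  constructor
  · intro h i
    have := Submodule.mem_map_of_mem (f := LinearMap.proj (R := R) (φ := fun _ : Fin n => R) i) h
    rw [Submodule.map_smul''] at this
    exact Ideal.mul_le_right (I := ⊤) (by simpa using Submodule.smul_mono le_rfl le_top this)
  · intro h
    have : v = ∑ i, v i • Pi.single i (1 : R) := by
      simpa using (pi_eq_sum_univ' v)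
    rw [this]
    exact Submodule.sum_mem _ fun i _ => Submodule.smul_mem_smul (h i) trivial

lemma apply_mem_smul_top {X Y : Type u} [AddCommGroup X] [Module R X] [AddCommGroup Y] [Module R Y]
    (h : X →ₗ[R] Y) (I : Ideal R) {x : X} (hx : x ∈ I • (⊤ : Submodule R X)) :
    h x ∈ I • (⊤ : Submodule R Y) := by
  have := Submodule.mem_map_of_mem (f := h) hx
  rw [Submodule.map_smul''] at this
  exact Submodule.smul_mono le_rfl le_top this

variable [IsLocalRing R]

lemma exists_minimal_cover (X : Type u) [AddCommGroup X] [Module R X] [Module.Finite R X] :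
    ∃ (n : ℕ) (p : (Fin n → R) →ₗ[R] X), Function.Surjective p ∧
      LinearMap.ker p ≤ maximalIdeal R • (⊤ : Submodule R (Fin n → R)) := by
  let b := Module.finBasis (ResidueField R) (ResidueField R ⊗[R] X)
  have hsurj : Function.Surjective (TensorProduct.mk R (ResidueField R) X 1) :=
    TensorProduct.mk_surjective R X (ResidueField R) residue_surjective
  choose x hx using fun i => hsurj (b i)
  refine ⟨_, Fintype.linearCombination R x, ?_, ?_⟩
  · rw [← LinearMap.range_eq_top, Fintype.range_linearCombination]
    exact span_eq_top_of_tmul_eq_basis x b hx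
  · intro v hv
    rw [mem_smul_top_pi_iff]
    have h0 : ∑ i, residue R (v i) • b i = 0 := by
      have := congrArg (TensorProduct.mk R (ResidueField R) X 1) hv
      rw [Fintype.linearCombination_apply, map_sum, map_zero] at this
      rw [← this]
      refine Finset.sum_congr rfl fun i _ => ?_
      rw [map_smul, hx]
      rfl
    intro i
    rw [← residue_eq_zero_iff]
    exact Fintype.linearIndependent_iff.1 b.linearIndependent _ h0 i

/-- Nakayama's lemma: a nonzero finite module has an element outside `𝔪X`. -/
lemma exists_notMem_smul_top (X : Type u) [AddCommGroup X] [Module R X] [Module.Finite R X]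
    [Nontrivial X] : ∃ x : X, x ∉ maximalIdeal R • (⊤ : Submodule R X) := by
  by_contra! h
  have := Submodule.eq_bot_of_le_smul_of_le_jacobson_bot (maximalIdeal R) (⊤ : Submodule R X)
    Module.Finite.fg_top (fun x _ => h x) (maximalIdeal_le_jacobson _)
  exact top_ne_bot this

/-- If `𝔪 = I ⊕ J` and a minimal generator `x` of `X` is killed by `J`, then `J` is a direct
summand of the syzygy of `X`: lift `x` to a basis element `e`, embed `J` as `J e`, and retract by
the coordinate of `e` followed by the projection `𝔪 → J`. -/
lemma isDirectSummand_ker_of_smul_eq_zero {I J : Ideal R} (hIJ : I ⊓ J = ⊥)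
    (hm : I ⊔ J = maximalIdeal R) {X : Type u} [AddCommGroup X] [Module R X] {n : ℕ}
    {p : (Fin n → R) →ₗ[R] X} (hp : Function.Surjective p)
    (hker : LinearMap.ker p ≤ maximalIdeal R • (⊤ : Submodule R (Fin n → R)))
    {x : X} (hx : x ∉ maximalIdeal R • (⊤ : Submodule R X)) (hJx : ∀ r ∈ J, r • x = 0) :
    IsDirectSummand R J (LinearMap.ker p) := by
  obtain ⟨e, rfl⟩ := hp x
  have he : ∃ i, IsUnit (e i) := by
    by_contra! h
    exact hx (apply_mem_smul_top p _ ((mem_smul_top_pi_iff _ _).2 fun i => h i))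
  obtain ⟨i, u, hu⟩ := he
  -- The projection `𝔪 → J` along `I`, written on `𝔪 = I ⊔ J`.
  have hπ : ∃ π : (maximalIdeal R) →ₗ[R] J, ∀ y (hy : y ∈ J) (hy' : y ∈ maximalIdeal R),
      π ⟨y, hy'⟩ = ⟨y, hy⟩ := by
    have hex : ∀ z : maximalIdeal R, ∃ y : J, (z : R) - y ∈ I := by
      rintro ⟨z, hz⟩
      rw [← hm] at hz
      obtain ⟨x, hx, y, hy, rfl⟩ := Submodule.mem_sup.1 hz
      exact ⟨⟨y, hy⟩, by simpa using hx⟩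
    have huniq : ∀ (z : R) (y y' : J), z - y ∈ I → z - y' ∈ I → y = y' := by
      intro z y y' h h'
      have h1 : (y : R) - y' ∈ I ⊓ J :=
        ⟨by have := I.sub_mem h' h; simpa using this, J.sub_mem y.2 y'.2⟩
      rw [hIJ, Submodule.mem_bot, sub_eq_zero] at h1
      exact Subtype.ext h1
    choose c hc using hex
    refine ⟨⟨⟨c, fun a b => huniq _ _ _ (hc _) ?_⟩, fun r a => huniq _ _ _ (hc _) ?_⟩, ?_⟩
    · have := I.add_mem (hc a) (hc b)
      convert this using 1
      push_cast
      ring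
    · have := I.mul_mem_left r (hc a)
      convert this using 1
      simp only [RingHom.id_apply, Submodule.coe_smul, smul_eq_mul]
      ring
    · intro y hy hy'
      exact huniq y _ _ (hc ⟨y, hy'⟩) (by simp)
  obtain ⟨π, hπ⟩ := hπ
  have hmem : ∀ v : LinearMap.ker p, ((↑u⁻¹ : R) • LinearMap.proj (R := R) (φ := fun _ => R) i ∘ₗ
      (LinearMap.ker p).subtype) v ∈ maximalIdeal R := fun v =>
    Ideal.mul_mem_left _ _ ((mem_smul_top_pi_iff _ _).1 (hker v.2) i)
  refine ⟨((LinearMap.toSpanSingleton R _ e) ∘ₗ J.subtype).codRestrict _ ?_,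
    π ∘ₗ LinearMap.codRestrict _ _ hmem, ?_⟩
  · intro y
    simpa using hJx y y.2
  · apply LinearMap.ext
    rintro ⟨y, hy⟩
    have hy' : y ∈ maximalIdeal R := hm ▸ Ideal.mem_sup_right hy
    refine Eq.trans ?_ (hπ y hy hy')
    rw [LinearMap.comp_apply, LinearMap.comp_apply]
    congr 1
    apply Subtype.ext
    simp [← hu, mul_left_comm]

end Cover

/-! ### Minimal syzygies -/

section Syzygy

variable {R : Type u} [CommRing R] [IsLocalRing R]

variable (R) in
/-- Finite `R`-modules, bundled so that syzygies can be iterated. -/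
abbrev FinMod : Type (u + 1) := {X : ModuleCat.{u} R // Module.Finite R X}

namespace FinMod

instance (X : FinMod R) : Module.Finite R X.1 := X.2

/-- The minimal number of generators of `X`, as the rank of the chosen minimal cover. -/
noncomputable def coverRank (X : FinMod R) : ℕ := (exists_minimal_cover (R := R) X.1).choose

/-- A chosen minimal free cover of `X`. -/
noncomputable def cover (X : FinMod R) : (Fin X.coverRank → R) →ₗ[R] X.1 :=
  (exists_minimal_cover (R := R) X.1).choose_spec.choose

lemma cover_surjective (X : FinMod R) : Function.Surjective X.cover :=
  (exists_minimal_cover (R := R) X.1).choose_spec.choose_spec.1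

lemma ker_cover_le (X : FinMod R) :
    LinearMap.ker X.cover ≤ maximalIdeal R • (⊤ : Submodule R (Fin X.coverRank → R)) :=
  (exists_minimal_cover (R := R) X.1).choose_spec.choose_spec.2

lemma coverRank_eq_zero (X : FinMod R) (h : Subsingleton X.1) : X.coverRank = 0 := by
  by_contra hne
  have hv := X.ker_cover_le (x := 1) (LinearMap.mem_ker.2 (Subsingleton.elim _ _))
  exact (mem_smul_top_pi_iff _ _).1 hv ⟨0, Nat.pos_of_ne_zero hne⟩ isUnit_one

variable [IsNoetherianRing R]

/-- `syz X n` is the `n`-th minimal syzygy `Ωⁿ X`. -/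
noncomputable def syz (X : FinMod R) : ℕ → FinMod R
  | 0 => X
  | n + 1 => ⟨.of R (LinearMap.ker (syz X n).cover),
      inferInstanceAs (Module.Finite R (LinearMap.ker (syz X n).cover))⟩

/-- The inclusion of `Ωⁿ⁺¹ X` into the minimal free cover of `Ωⁿ X`. -/
noncomputable def incl (X : FinMod R) (n : ℕ) :
    (X.syz (n + 1)).1 →ₗ[R] (Fin (X.syz n).coverRank → R) :=
  (LinearMap.ker (X.syz n).cover).subtype

lemma incl_injective (X : FinMod R) (n : ℕ) : Function.Injective (X.incl n) :=
  Submodule.subtype_injective _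

lemma range_incl (X : FinMod R) (n : ℕ) :
    LinearMap.range (X.incl n) = LinearMap.ker (X.syz n).cover :=
  Submodule.range_subtype _

lemma exact_incl_cover (X : FinMod R) (n : ℕ) : Function.Exact (X.incl n) (X.syz n).cover :=
  LinearMap.exact_iff.2 (X.range_incl n).symm

lemma incl_mem (X : FinMod R) (n : ℕ) (v : (X.syz (n + 1)).1) :
    X.incl n v ∈ maximalIdeal R • (⊤ : Submodule R (Fin (X.syz n).coverRank → R)) :=
  ker_cover_le _ (X.range_incl n ▸ LinearMap.mem_range_self _ v)

/-- The minimal free resolution spliced together from the covers of the syzygies. -/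
noncomputable def resolution (X : FinMod R) : MinimalFreeResolution R X.1 where
  rank n := (X.syz n).coverRank
  aug := (X.syz 0).cover
  d n := X.incl n ∘ₗ (X.syz (n + 1)).cover
  aug_surjective := X.cover_surjective
  exact_aug := by
    rw [LinearMap.range_comp_of_range_eq_top _ (LinearMap.range_eq_top.2 (cover_surjective _))]
    exact (range_incl X 0).symm
  exact n := by
    rw [LinearMap.range_comp_of_range_eq_top _ (LinearMap.range_eq_top.2 (cover_surjective _)),
      LinearMap.ker_comp_of_ker_eq_bot _ (LinearMap.ker_eq_bot.2 (incl_injective _ _)), range_incl]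
  minimal n := by
    rintro _ ⟨v, rfl⟩
    exact X.incl_mem n _

lemma subsingleton_syz_succ (X : FinMod R) (n : ℕ) (h : Subsingleton (X.syz n).1) :
    Subsingleton (X.syz (n + 1)).1 := by
  have h0 := coverRank_eq_zero _ h
  have : IsEmpty (Fin (X.syz n).coverRank) := by rw [h0]; infer_instance
  exact inferInstanceAs (Subsingleton (LinearMap.ker (X.syz n).cover))

lemma subsingleton_syz_of_le (X : FinMod R) {m n : ℕ} (hmn : m ≤ n)
    (h : Subsingleton (X.syz m).1) : Subsingleton (X.syz n).1 := by
  induction n, hmn using Nat.le_induction with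
  | base => exact h
  | succ n _ ih => exact X.subsingleton_syz_succ n ih

lemma projDimLE_one (X : FinMod R) (h : Subsingleton (X.syz 2).1) : ProjDimLE R X.1 1 :=
  ⟨X.resolution, fun _ hi => coverRank_eq_zero _ (X.subsingleton_syz_of_le hi h)⟩

lemma tor1Zero_syz_shift (X Y : FinMod R) (a b : ℕ) :
    Tor1Zero R (X.syz (a + 1)).1 (Y.syz b).1 ↔ Tor1Zero R (X.syz a).1 (Y.syz (b + 1)).1 :=
  tor1Zero_shift (Y.incl_injective b) (Y.exact_incl_cover b) (cover_surjective _)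
    (X.incl_injective a) (X.exact_incl_cover a) (cover_surjective _)

lemma tor1Zero_syz_add (X Y : FinMod R) (a b c : ℕ)
    (h : Tor1Zero R (X.syz (a + c)).1 (Y.syz b).1) :
    Tor1Zero R (X.syz a).1 (Y.syz (b + c)).1 := by
  induction c generalizing b with
  | zero => exact h
  | succ c ih =>
    have := ih (b + 1) ((tor1Zero_syz_shift X Y (a + c) b).1 h)
    rwa [add_right_comm, add_assoc] at this

/-- If `Tor₁(𝔪, Ωⁿ X) = 0`, equivalently `Tor₂(k, Ωⁿ X) = 0`, then `Ωⁿ⁺² X = 0`. -/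
lemma subsingleton_of_tor1Zero_maximalIdeal (X : FinMod R) (n : ℕ)
    (h : Tor1Zero R (maximalIdeal R) (X.syz n).1) : Subsingleton (X.syz (n + 2)).1 := by
  have hex : Function.Exact (maximalIdeal R).subtype (Algebra.linearMap R (ResidueField R)) := by
    intro x
    simp only [Algebra.linearMap_apply, ResidueField.algebraMap_eq, residue_eq_zero_iff]
    simp
  have h1 : Tor1Zero R (ResidueField R) (X.syz (n + 1)).1 :=
    (tor1Zero_shift (X.incl_injective n) (X.exact_incl_cover n) (cover_surjective _)
      (Submodule.subtype_injective _) hex residue_surjective).1 h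
  have h2 := (tor1Zero_iff (X.incl_injective (n + 1)) (X.exact_incl_cover (n + 1))
    (cover_surjective _)).1 h1
  refine (IsLocalRing.subsingleton_tensorProduct (R := R)).1 ?_
  refine (subsingleton_iff_forall_eq 0).2 fun v => h2 ?_
  rw [map_zero]
  -- The map `k ⊗ Ω → k ⊗ F` is zero, because `Ω ⊆ 𝔪 F`.
  induction v with
  | zero => exact map_zero _
  | add x y hx hy => rw [map_add, hx, hy, add_zero]
  | tmul c w =>
    rw [LinearMap.lTensor_tmul]
    refine Submodule.smul_induction_on (X.incl_mem (n + 1) w) (fun r hr x _ => ?_)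
      fun x y hx hy => ?_
    · rw [TensorProduct.tmul_smul, TensorProduct.smul_tmul', Algebra.smul_def,
        ResidueField.algebraMap_eq, (residue_eq_zero_iff r).2 hr, zero_mul, zero_tmul]
    · rw [tmul_add, hx, hy, add_zero]

end FinMod

end Syzygy

/-! ### Syzygies when the maximal ideal decomposes -/

section Decomposable

variable {R : Type u} [CommRing R] {I J : Ideal R}

lemma mul_eq_zero_of_inf_eq_bot (hIJ : I ⊓ J = ⊥) {a b : R} (ha : a ∈ I) (hb : b ∈ J) :
    a * b = 0 := by
  have : a * b ∈ I ⊓ J := ⟨I.mul_mem_right b ha, J.mul_mem_left a hb⟩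
  rwa [hIJ, Submodule.mem_bot] at this

variable [IsNoetherianRing R] [IsLocalRing R]

namespace FinMod

/-- A nonzero second syzygy `Ω² = ker (F₁ → F₀)` lies in `𝔪F₁ = IF₁ ⊕ JF₁` and is a direct sum of
its intersections with `IF₁` and `JF₁`; hence one of these contains a minimal generator, which is
killed by `J`, respectively by `I`. -/
lemma exists_generator_syz_two (hIJ : I ⊓ J = ⊥) (hm : I ⊔ J = maximalIdeal R) (X : FinMod R)
    [Nontrivial (X.syz 2).1] :
    ∃ x : (X.syz 2).1, x ∉ maximalIdeal R • (⊤ : Submodule R (X.syz 2).1) ∧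
      ((∀ r ∈ J, r • x = 0) ∨ ∀ r ∈ I, r • x = 0) := by
  obtain ⟨y, hy⟩ := exists_notMem_smul_top (R := R) (X.syz 2).1
  let d := X.incl 0 ∘ₗ (X.syz 1).cover
  have hd : LinearMap.ker d = LinearMap.range (X.incl 1) :=
    (LinearMap.ker_comp_of_ker_eq_bot _ (LinearMap.ker_eq_bot.2 (X.incl_injective 0))).trans
      (X.range_incl 1).symm
  have hy1 := (mem_smul_top_pi_iff _ _).1 (X.incl_mem 1 y)
  have hsplit : ∀ j, ∃ a ∈ I, ∃ b ∈ J, a + b = X.incl 1 y j := fun j => by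
    have := hy1 j
    rw [← hm] at this
    exact Submodule.mem_sup.1 this
  choose a ha b hb hab using hsplit
  have hab' : a + b = X.incl 1 y := funext hab
  have hdab : d a + d b = 0 := by
    rw [← map_add, hab']
    exact LinearMap.mem_ker.1 (hd ▸ LinearMap.mem_range_self _ y)
  have hda := (mem_smul_top_pi_iff _ _).1
    (apply_mem_smul_top d I ((mem_smul_top_pi_iff _ _).2 ha))
  have hdb := (mem_smul_top_pi_iff _ _).1
    (apply_mem_smul_top d J ((mem_smul_top_pi_iff _ _).2 hb))
  have hda0 : d a = 0 := by
    funext j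
    have h1 : d a j ∈ I ⊓ J := by
      refine ⟨hda j, ?_⟩
      rw [eq_neg_of_add_eq_zero_left hdab]
      exact J.neg_mem (hdb j)
    rwa [hIJ, Submodule.mem_bot] at h1
  have hdb0 : d b = 0 := by rwa [hda0, zero_add] at hdab
  obtain ⟨a', ha'⟩ : a ∈ LinearMap.range (X.incl 1) := hd ▸ LinearMap.mem_ker.2 hda0
  obtain ⟨b', hb'⟩ : b ∈ LinearMap.range (X.incl 1) := hd ▸ LinearMap.mem_ker.2 hdb0
  have hy' : y = a' + b' := X.incl_injective 1 (by rw [map_add, ha', hb', hab'])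
  by_cases h : a' ∈ maximalIdeal R • (⊤ : Submodule R (X.syz 2).1)
  · refine ⟨b', fun h' => hy (hy' ▸ Submodule.add_mem _ h h'), .inr fun r hr => ?_⟩
    apply X.incl_injective 1
    rw [map_smul, hb', map_zero]
    exact funext fun j => mul_eq_zero_of_inf_eq_bot hIJ hr (hb j)
  · refine ⟨a', h, .inl fun r hr => ?_⟩
    apply X.incl_injective 1
    rw [map_smul, ha', map_zero]
    exact funext fun j => (mul_comm _ _).trans (mul_eq_zero_of_inf_eq_bot hIJ (ha j) hr)

lemma isDirectSummand_syz_succ (hIJ : I ⊓ J = ⊥) (hm : I ⊔ J = maximalIdeal R) (X : FinMod R)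
    (n : ℕ) {x : (X.syz n).1} (hx : x ∉ maximalIdeal R • (⊤ : Submodule R (X.syz n).1))
    (hJx : ∀ r ∈ J, r • x = 0) : IsDirectSummand R J (X.syz (n + 1)).1 :=
  isDirectSummand_ker_of_smul_eq_zero hIJ hm (cover_surjective _) (ker_cover_le _) hx hJx

/-- If `I` is a summand of `Ωⁿ`, then a minimal generator of `I` is one of `Ωⁿ` killed by `J`. -/
lemma isDirectSummand_syz_swap (hIJ : I ⊓ J = ⊥) (hm : I ⊔ J = maximalIdeal R) (hI : I ≠ ⊥)
    (X : FinMod R) (n : ℕ) (h : IsDirectSummand R I (X.syz n).1) :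
    IsDirectSummand R J (X.syz (n + 1)).1 := by
  obtain ⟨ι, π, hπ⟩ := h
  have : Nontrivial I := Submodule.nontrivial_iff_ne_bot.2 hI
  obtain ⟨y, hy⟩ := exists_notMem_smul_top (R := R) I
  refine isDirectSummand_syz_succ hIJ hm X n (x := ι y) (fun h => hy ?_) fun r hr => ?_
  · have := apply_mem_smul_top π _ h
    rwa [← LinearMap.comp_apply, hπ] at this
  · rw [← map_smul]
    have : r • y = 0 :=
      Subtype.ext ((mul_comm _ _).trans (mul_eq_zero_of_inf_eq_bot hIJ y.2 hr))
    rw [this, map_zero]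

/-- If `Ω² X ≠ 0`, then from `Ω³ X` on one of `I`, `J` is a direct summand of each syzygy, and the
two alternate. -/
lemma isDirectSummand_syz_alternate (hIJ : I ⊓ J = ⊥) (hm : I ⊔ J = maximalIdeal R) (hI : I ≠ ⊥)
    (hJ : J ≠ ⊥) (X : FinMod R) [Nontrivial (X.syz 2).1] (n : ℕ) :
    (IsDirectSummand R I (X.syz (n + 3)).1 ∧ IsDirectSummand R J (X.syz (n + 4)).1) ∨
      (IsDirectSummand R J (X.syz (n + 3)).1 ∧ IsDirectSummand R I (X.syz (n + 4)).1) := by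
  have hJI : J ⊓ I = ⊥ := by rw [inf_comm, hIJ]
  have hm' : J ⊔ I = maximalIdeal R := by rw [sup_comm, hm]
  induction n with
  | zero =>
    obtain ⟨x, hx, h | h⟩ := exists_generator_syz_two hIJ hm X
    · have h3 := isDirectSummand_syz_succ hIJ hm X 2 hx h
      exact .inr ⟨h3, isDirectSummand_syz_swap hJI hm' hJ X 3 h3⟩
    · have h3 := isDirectSummand_syz_succ hJI hm' X 2 hx h
      exact .inl ⟨h3, isDirectSummand_syz_swap hIJ hm hI X 3 h3⟩
  | succ n ih =>
    rw [show n + 1 + 3 = n + 4 by lia, show n + 1 + 4 = n + 4 + 1 by lia]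
    rcases ih with ⟨_, h⟩ | ⟨_, h⟩
    · exact .inr ⟨h, isDirectSummand_syz_swap hJI hm' hJ X _ h⟩
    · exact .inl ⟨h, isDirectSummand_syz_swap hIJ hm hI X _ h⟩

lemma subsingleton_syz_two (hIJ : I ⊓ J = ⊥) (hm : I ⊔ J = maximalIdeal R) (hI : I ≠ ⊥)
    (hJ : J ≠ ⊥) (X : FinMod R) (n : ℕ) (h : Subsingleton (X.syz n).1) :
    Subsingleton (X.syz 2).1 := by
  by_contra h2
  rw [not_subsingleton_iff_nontrivial] at h2
  have hs := X.subsingleton_syz_of_le (Nat.le_add_right n 3) h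
  have key (A : Ideal R) (hA : A ≠ ⊥) (hd : IsDirectSummand R A (X.syz (n + 3)).1) : False := by
    obtain ⟨ι, π, hπ⟩ := hd
    refine hA ((Submodule.subsingleton_iff_eq_bot).1 ⟨fun a b => ?_⟩)
    rw [← LinearMap.id_apply (R := R) a, ← LinearMap.id_apply (R := R) b, ← hπ,
      LinearMap.comp_apply, LinearMap.comp_apply, Subsingleton.elim (ι a) (ι b)]
  rcases isDirectSummand_syz_alternate hIJ hm hI hJ X n with ⟨h, _⟩ | ⟨h, _⟩
  exacts [key I hI h, key J hJ h]

/-- The theorem for a local ring with `𝔪 = I ⊕ J`, in terms of `Tor₁` of syzygies: the hypotheses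
say `Tor_{n+5}(X, Y) = Tor_{n+6}(X, Y) = 0`. -/
lemma subsingleton_syz_two_or (hIJ : I ⊓ J = ⊥) (hm : I ⊔ J = maximalIdeal R) (hI : I ≠ ⊥)
    (hJ : J ≠ ⊥) (X Y : FinMod R) (n : ℕ) (h₁ : Tor1Zero R (X.syz (n + 4)).1 Y.1)
    (h₂ : Tor1Zero R (X.syz (n + 5)).1 Y.1) :
    Subsingleton (X.syz 2).1 ∨ Subsingleton (Y.syz 2).1 := by
  by_cases hX : Subsingleton (X.syz 2).1
  · exact .inl hX
  rw [not_subsingleton_iff_nontrivial] at hX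
  have h3 : Tor1Zero R (X.syz 3).1 (Y.syz (n + 1)).1 := by
    have := tor1Zero_syz_add X Y 3 0 (n + 1) (by rwa [show 3 + (n + 1) = n + 4 by lia])
    rwa [zero_add] at this
  have h4 : Tor1Zero R (X.syz 4).1 (Y.syz (n + 1)).1 := by
    have := tor1Zero_syz_add X Y 4 0 (n + 1) (by rwa [show 4 + (n + 1) = n + 5 by lia])
    rwa [zero_add] at this
  have hmY : Tor1Zero R (maximalIdeal R) (Y.syz (n + 1)).1 := by
    rw [← hm]
    rcases isDirectSummand_syz_alternate hIJ hm hI hJ X 0 with ⟨h, h'⟩ | ⟨h, h'⟩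
    · exact Tor1Zero.sup hIJ (h3.of_isDirectSummand h) (h4.of_isDirectSummand h')
    · exact Tor1Zero.sup hIJ (h4.of_isDirectSummand h') (h3.of_isDirectSummand h)
  exact .inr (subsingleton_syz_two hIJ hm hI hJ Y _
    (subsingleton_of_tor1Zero_maximalIdeal Y (n + 1) hmY))

end FinMod

end Decomposable

/-! ### Comparison with the derived functor `Tor` -/

section DerivedTor

variable {R : Type u} [CommRing R]

lemma Tor1Zero.congr_right {X Y Y' : Type u} [AddCommGroup X] [Module R X] [AddCommGroup Y]
    [Module R Y] [AddCommGroup Y'] [Module R Y'] (h : Tor1Zero R X Y) (e : Y ≃ₗ[R] Y') :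
    Tor1Zero R X Y' := by
  obtain ⟨K, F, i, p, hF, hi, hip, hp, h⟩ := h
  refine ⟨K, F, i, e.toLinearMap ∘ₗ p, hF, hi, fun x => ?_, e.surjective.comp hp, h⟩
  rw [← hip x]
  simp

variable {N : ModuleCat.{u} R} (P : ProjectiveResolution N)

/-- The cokernel of `P_{n+1} → P_n`, an `n`-th (not necessarily minimal) syzygy of `N`. -/
abbrev resCoker (n : ℕ) : Type u :=
  P.complex.X n ⧸ LinearMap.range (P.complex.d (n + 1) n).hom

/-- The inclusion of the `(n+1)`-st syzygy into `P_n`. -/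
noncomputable def resIncl (n : ℕ) : resCoker P (n + 1) →ₗ[R] P.complex.X n :=
  Submodule.liftQ _ (P.complex.d (n + 1) n).hom (by
    rw [← (P.exact_succ n).moduleCat_range_eq_ker])

lemma resIncl_injective (n : ℕ) : Function.Injective (resIncl P n) := by
  rw [← LinearMap.ker_eq_bot, resIncl, Submodule.ker_liftQ_eq_bot]
  rw [← (P.exact_succ n).moduleCat_range_eq_ker]

lemma exact_resIncl (n : ℕ) : Function.Exact (resIncl P n)
    (LinearMap.range (P.complex.d (n + 1) n).hom).mkQ := by
  rw [LinearMap.exact_iff, Submodule.ker_mkQ, resIncl, Submodule.range_liftQ]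

instance flat_res (n : ℕ) : Module.Flat R (P.complex.X n) := by
  have : Module.Projective R (P.complex.X n) :=
    (IsProjective.iff_projective _).2 (P.projective n)
  infer_instance

/-- The zeroth syzygy is `N` itself. -/
lemma nonempty_resCoker_zero_equiv : Nonempty (resCoker P 0 ≃ₗ[R] N) := by
  have hex := P.exact₀.moduleCat_range_eq_ker
  have hs : Function.Surjective (P.π.f 0).hom :=
    (ModuleCat.epi_iff_surjective (P.π.f 0)).1 inferInstance
  exact ⟨(Submodule.quotEquivOfEq _ _ hex).trans
    (LinearMap.quotKerEquivOfSurjective (P.π.f 0).hom hs)⟩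

lemma tor1Zero_resCoker_of_subsingleton_tor {M : ModuleCat.{u} R} (n : ℕ)
    (h : Subsingleton (((Tor (ModuleCat.{u} R) (n + 1)).obj M).obj N)) :
    Tor1Zero R M (resCoker P n) := by
  let G := (MonoidalCategory.tensoringLeft (ModuleCat.{u} R)).obj M
  have hz : Limits.IsZero (((G.mapHomologicalComplex _).obj P.complex).homology (n + 1)) :=
    (ModuleCat.isZero_iff_subsingleton.2 h).of_iso (P.isoLeftDerivedObj G (n + 1)).symm
  rw [← HomologicalComplex.exactAt_iff_isZero_homology,
    HomologicalComplex.exactAt_iff' _ (n + 2) (n + 1) n (by simp only [ChainComplex.prev]; rfl)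
      (by simp), ShortComplex.moduleCat_exact_iff] at hz
  have hz' : ∀ w : M ⊗[R] P.complex.X (n + 1),
      (P.complex.d (n + 1) n).hom.lTensor M w = 0 →
      ∃ z, (P.complex.d (n + 2) (n + 1)).hom.lTensor M z = w := hz
  rw [tor1Zero_iff (resIncl_injective P n) (exact_resIncl P n) (Submodule.mkQ_surjective _),
    injective_iff_map_eq_zero]
  intro v hv
  obtain ⟨w, rfl⟩ := LinearMap.lTensor_surjective M
    (Submodule.mkQ_surjective (LinearMap.range (P.complex.d (n + 1 + 1) (n + 1)).hom)) v
  rw [← LinearMap.comp_apply, ← LinearMap.lTensor_comp, resIncl, Submodule.liftQ_mkQ] at hv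
  obtain ⟨z, rfl⟩ := hz' w hv
  rw [← LinearMap.comp_apply, ← LinearMap.lTensor_comp, LinearMap.range_mkQ_comp,
    LinearMap.lTensor_zero, LinearMap.zero_apply]

variable [IsNoetherianRing R] [IsLocalRing R]

lemma tor1Zero_syz_of_resCoker (X : FinMod R) (n a : ℕ)
    (h : Tor1Zero R (X.syz a).1 (resCoker P n)) : Tor1Zero R (X.syz (a + n)).1 N := by
  induction n generalizing a with
  | zero =>
    obtain ⟨e⟩ := nonempty_resCoker_zero_equiv P
    exact h.congr_right e
  | succ n ih =>
    have := ih (a + 1) ((tor1Zero_shift (resIncl_injective P n) (exact_resIncl P n)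
      (Submodule.mkQ_surjective _) (X.incl_injective a) (X.exact_incl_cover a)
      (FinMod.cover_surjective _)).2 h)
    rwa [show a + (n + 1) = a + 1 + n by lia]

lemma tor1Zero_syz_of_subsingleton_tor (X : FinMod R) (N : ModuleCat.{u} R) (n : ℕ)
    (h : Subsingleton (((Tor (ModuleCat.{u} R) (n + 1)).obj X.1).obj N)) :
    Tor1Zero R (X.syz n).1 N := by
  have := tor1Zero_syz_of_resCoker (ProjectiveResolution.of N) X n 0
    (tor1Zero_resCoker_of_subsingleton_tor _ n h)
  rwa [zero_add] at this

end DerivedTor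

/-! ### The fiber product -/

section FiberProduct

variable {k S T : Type u} [Field k] [CommRing S] [IsLocalRing S] [CommRing T] [IsLocalRing T]
  {f : S →+* k} {g : T →+* k}

/-- Holds because an element `(s, t)` of the fiber product with nonzero image in `k` has the
inverse `(s⁻¹, t⁻¹)`, which again lies in the fiber product. -/
lemma mem_maximalIdeal_fiberProduct (hkf : RingHom.ker f = maximalIdeal S)
    (hkg : RingHom.ker g = maximalIdeal T) {R : Subring (S × T)}
    (hR : R = RingHom.eqLocus (f.comp (RingHom.fst S T)) (g.comp (RingHom.snd S T)))
    [IsLocalRing R] {x : R} (hx : x ∈ maximalIdeal R) : f x.1.1 = 0 ∧ g x.1.2 = 0 := by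
  have hfg : f x.1.1 = g x.1.2 := hR.le x.2
  suffices f x.1.1 = 0 from ⟨this, hfg ▸ this⟩
  by_contra hne
  have hs : IsUnit x.1.1 := by
    by_contra h
    exact hne (RingHom.mem_ker.1 (hkf ▸ (mem_maximalIdeal _).2 h))
  have ht : IsUnit x.1.2 := by
    by_contra h
    exact hne (hfg.trans (RingHom.mem_ker.1 (hkg ▸ (mem_maximalIdeal _).2 h)))
  obtain ⟨s, hs⟩ := hs
  obtain ⟨t, ht⟩ := ht
  have hinv : ((↑s⁻¹, ↑t⁻¹) : S × T) ∈ R := by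
    rw [hR]
    change f ↑s⁻¹ = g ↑t⁻¹
    rw [map_units_inv, map_units_inv, hs, ht, hfg]
  refine (mem_maximalIdeal _).1 hx (IsUnit.of_mul_eq_one ⟨_, hinv⟩ (Subtype.ext ?_))
  ext
  · change x.1.1 * ↑s⁻¹ = 1
    rw [← hs, Units.mul_inv]
  · change x.1.2 * ↑t⁻¹ = 1
    rw [← ht, Units.mul_inv]

/-- The maximal ideal of `S ×ₖ T` is `𝔪_S ⊕ 𝔪_T`, realised as the kernels of the two projections,
and both summands are nonzero when neither ring is a field. -/
lemma exists_decomposition_fiberProduct (hkf : RingHom.ker f = maximalIdeal S)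
    (hkg : RingHom.ker g = maximalIdeal T) (hSk : ¬ IsField S) (hTk : ¬ IsField T)
    {R : Subring (S × T)}
    (hR : R = RingHom.eqLocus (f.comp (RingHom.fst S T)) (g.comp (RingHom.snd S T)))
    [IsLocalRing R] :
    ∃ I J : Ideal R, I ⊓ J = ⊥ ∧ I ⊔ J = maximalIdeal R ∧ I ≠ ⊥ ∧ J ≠ ⊥ := by
  have hl : ∀ s : S, f s = 0 → ((s, 0) : S × T) ∈ R := fun s hs => by
    rw [hR]
    change f s = g 0
    rw [hs, map_zero]
  have hr : ∀ t : T, g t = 0 → ((0, t) : S × T) ∈ R := fun t ht => by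
    rw [hR]
    change f 0 = g t
    rw [ht, map_zero]
  refine ⟨RingHom.ker ((RingHom.snd S T).comp R.subtype),
    RingHom.ker ((RingHom.fst S T).comp R.subtype), ?_, le_antisymm (sup_le ?_ ?_) ?_, ?_, ?_⟩
  · rw [eq_bot_iff]
    rintro x ⟨h2, h1⟩
    exact Subtype.ext (Prod.ext h1 h2)
  · exact le_maximalIdeal (RingHom.ker_ne_top _)
  · exact le_maximalIdeal (RingHom.ker_ne_top _)
  · intro x hx
    obtain ⟨h1, h2⟩ := mem_maximalIdeal_fiberProduct hkf hkg hR hx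
    refine Submodule.mem_sup.2 ⟨⟨(x.1.1, 0), hl _ h1⟩, rfl, ⟨(0, x.1.2), hr _ h2⟩, rfl, ?_⟩
    apply Subtype.ext
    ext
    · exact add_zero _
    · exact zero_add _
  · obtain ⟨s, hs, hs0⟩ := Submodule.exists_mem_ne_zero_of_ne_bot
      (fun h => hSk (isField_iff_maximalIdeal_eq.2 h))
    rw [← hkf] at hs
    refine (Submodule.ne_bot_iff _).2 ⟨⟨(s, 0), hl s hs⟩, rfl, fun h => hs0 ?_⟩
    exact congrArg (fun x : R => x.1.1) h
  · obtain ⟨t, ht, ht0⟩ := Submodule.exists_mem_ne_zero_of_ne_bot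
      (fun h => hTk (isField_iff_maximalIdeal_eq.2 h))
    rw [← hkg] at ht
    refine (Submodule.ne_bot_iff _).2 ⟨⟨(0, t), hr t ht⟩, rfl, fun h => ht0 ?_⟩
    exact congrArg (fun x : R => x.1.2) h

end FiberProduct

/-- **Corollary 7.2(2) (Nasseh–Sather-Wagstaff).** Let `R = S ×ₖ T` be a non-trivial fiber product
of noetherian local rings `S`, `T` with common residue field `k`. If
`Tor_ℓ^R(M, N) = 0 = Tor_{ℓ+1}^R(M, N)` for some `ℓ ≥ 5`, then `pd_R M ≤ 1` or `pd_R N ≤ 1`. -/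
theorem projDim_le_one_of_two_tor_vanishings_over_fiber_product
    (k S T : Type u) [Field k]
    [CommRing S] [IsNoetherianRing S] [IsLocalRing S]
    [CommRing T] [IsNoetherianRing T] [IsLocalRing T]
    (f : S →+* k) (g : T →+* k)
    (hf : Function.Surjective f) (hg : Function.Surjective g)
    (hkf : RingHom.ker f = maximalIdeal S) (hkg : RingHom.ker g = maximalIdeal T)
    (hSk : ¬ IsField S) (hTk : ¬ IsField T)
    (R : Subring (S × T))
    (hR : R = RingHom.eqLocus (f.comp (RingHom.fst S T)) (g.comp (RingHom.snd S T)))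
    [IsNoetherianRing ↥R] [IsLocalRing ↥R]
    (M N : Type u) [AddCommGroup M] [Module ↥R M] [Module.Finite ↥R M]
    [AddCommGroup N] [Module ↥R N] [Module.Finite ↥R N]
    (ℓ : ℕ) (hl : 5 ≤ ℓ)
    (htor₁ : Subsingleton
      (((Tor (ModuleCat.{u} ↥R) ℓ).obj (ModuleCat.of ↥R M)).obj (ModuleCat.of ↥R N)))
    (htor₂ : Subsingleton
      (((Tor (ModuleCat.{u} ↥R) (ℓ + 1)).obj (ModuleCat.of ↥R M)).obj (ModuleCat.of ↥R N))) :
    ProjDimLE (↥R) M 1 ∨ ProjDimLE (↥R) N 1 := by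
  obtain ⟨I, J, hIJ, hm, hI, hJ⟩ := exists_decomposition_fiberProduct hkf hkg hSk hTk hR
  obtain ⟨n, rfl⟩ := Nat.exists_eq_add_of_le' hl
  let X : FinMod ↥R := ⟨ModuleCat.of ↥R M, inferInstanceAs (Module.Finite ↥R M)⟩
  let Y : FinMod ↥R := ⟨ModuleCat.of ↥R N, inferInstanceAs (Module.Finite ↥R N)⟩
  have h₁ := tor1Zero_syz_of_subsingleton_tor X Y.1 (n + 4) htor₁
  have h₂ := tor1Zero_syz_of_subsingleton_tor X Y.1 (n + 5) htor₂
  exact (FinMod.subsingleton_syz_two_or hIJ hm hI hJ X Y n h₁ h₂).imp X.projDimLE_one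
    Y.projDimLE_one
end

section
/- Let (R, 𝔪) be a commutative noetherian local ring whose maximal ideal 𝔪 is quasi-decomposable, and let M and N be finitely generated R-modules such that Ext_R^i(M, N) = 0 for all sufficiently large i. Then M has finite projective dimension over R or N has finite injective dimension over R. -/
/-!
Call a class of modules thick if it is closed under direct summands and has the two-out-of-three
property for short exact sequences. Two examples contain `R`: the modules of finite projective
dimension, and the modules `A` with `Ext^i(A, N) = 0` for `i ≫ 0` (`ExtVanish`). The heart of the
proof is a dichotomy (`ThickDichotomy`): every finitely generated `A` either lies in every thick
class containing `R`, or every thick class containing `R` and `A` contains the residue field `k`.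

If `𝔪 = I ⊕ J` with `I, J ≠ 0`, let `C` be a second syzygy of `A`, the last cover being minimal. If
`C = 0`, the first alternative holds. Otherwise applying the projections `𝔪 → I` and `𝔪 → J`
coordinatewise splits `C` as a module killed by `J` plus a module killed by `I`
(`exists_syzygy_idempotent`), one of which is nonzero. The first syzygy of a nonzero module killed
by `J` has `J` as a direct summand (`IsThick.ideal_of_killed`); since `J` is itself killed by `I`,
the same step puts `I` into the thick class, hence also `𝔪 = I ⊕ J` and `k = R/𝔪`.

The dichotomy lifts from `R/(x)` to `R` for a regular element `x ∈ 𝔪`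
(`thickDichotomy_of_quotient`) by applying it to `B/xB` with `B` a first syzygy of `A`: thick classes
over `R` restrict to thick classes over `R/(x)`, and `B` has finite projective dimension when `B/xB`
does. By induction it holds when `𝔪` is quasi-decomposable.

For `A = M` the first alternative gives finite projective dimension. The second one gives
`Ext^i(k, N) = 0` for `i ≫ 0`, which bounds the injective dimension of `N` by noetherian induction
with Nakayama's lemma (`subsingleton_ext_of_residue`) and Baer's criterion
(`hasInjectiveDimensionLT_of_ext_quotient`).
-/

universe u

open IsLocalRing CategoryTheory

/-- A module is decomposable if it is the (internal) direct sum of two nonzero submodules. -/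
def IsDecomposableModule (A : Type u) [CommRing A] (M : Type u) [AddCommGroup M]
    [Module A M] : Prop :=
  ∃ N₁ N₂ : Submodule A M, N₁ ≠ ⊥ ∧ N₂ ≠ ⊥ ∧ N₁ ⊓ N₂ = ⊥ ∧ N₁ ⊔ N₂ = ⊤

/-- The maximal ideal `𝔪` of `R` is quasi-decomposable: there is an `R`-regular sequence `𝐱` in
`𝔪` such that `𝔪/(𝐱)` is decomposable. -/
def HasQuasiDecomposableMaxIdeal (R : Type u) [CommRing R] [IsLocalRing R] : Prop :=
  ∃ x : List R, (∀ a ∈ x, a ∈ maximalIdeal R) ∧ RingTheory.Sequence.IsRegular R x ∧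
    IsDecomposableModule (R ⧸ Ideal.ofList x)
      (↥((maximalIdeal R).map (Ideal.Quotient.mk (Ideal.ofList x))))

/-- A finite injective resolution `0 → N → E⁰ → E¹ → ⋯ → E^len → 0` of the `R`-module `N`;
its existence says exactly that `N` has finite injective dimension. -/
structure FiniteInjectiveResolution (R : Type u) [CommRing R]
    (N : Type u) [AddCommGroup N] [Module R N] where
  len : ℕ
  ob : ℕ → ModuleCat.{u} R
  injective : ∀ i, Module.Injective R (ob i)
  aug : N →ₗ[R] (ob 0)
  d : (i : ℕ) → ((ob i) →ₗ[R] (ob (i + 1)))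
  aug_injective : Function.Injective aug
  exact_aug : LinearMap.ker (d 0) = LinearMap.range aug
  exact : ∀ i, LinearMap.ker (d (i + 1)) = LinearMap.range (d i)
  bounded : ∀ i, len < i → Subsingleton (ob i)

/-! ### Thick classes of modules -/

/-- A class of modules that is closed under direct summands and has the two-out-of-three property
for short exact sequences. -/
structure IsThick {R : Type u} [CommRing R] (Q : ModuleCat.{u} R → Prop) : Prop where
  retract : ∀ {X Y : ModuleCat.{u} R}, Retract X Y → Q Y → Q X
  X₁ : ∀ {S : ShortComplex (ModuleCat.{u} R)}, S.ShortExact → Q S.X₂ → Q S.X₃ → Q S.X₁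
  X₂ : ∀ {S : ShortComplex (ModuleCat.{u} R)}, S.ShortExact → Q S.X₁ → Q S.X₃ → Q S.X₂
  X₃ : ∀ {S : ShortComplex (ModuleCat.{u} R)}, S.ShortExact → Q S.X₁ → Q S.X₂ → Q S.X₃

namespace IsThick

variable {R : Type u} [CommRing R] {Q : ModuleCat.{u} R → Prop}
  {A B : Type u} [AddCommGroup A] [Module R A] [AddCommGroup B] [Module R B]

lemma of_retract (hQ : IsThick Q) (i : A →ₗ[R] B) (r : B →ₗ[R] A) (h : ∀ a, r (i a) = a)
    (hB : Q (ModuleCat.of R B)) : Q (ModuleCat.of R A) :=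
  hQ.retract (X := ModuleCat.of R A) (Y := ModuleCat.of R B)
    { i := ModuleCat.ofHom i
      r := ModuleCat.ofHom r
      retract := by ext a; exact h a } hB

lemma of_equiv (hQ : IsThick Q) (e : A ≃ₗ[R] B) (hB : Q (ModuleCat.of R B)) :
    Q (ModuleCat.of R A) :=
  hQ.of_retract e.toLinearMap e.symm.toLinearMap (by simp) hB

lemma ker (hQ : IsThick Q) {f : A →ₗ[R] B} (hf : Function.Surjective f)
    (hA : Q (ModuleCat.of R A)) (hB : Q (ModuleCat.of R B)) :
    Q (ModuleCat.of R (LinearMap.ker f)) :=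
  hQ.X₁ (LinearMap.shortExact_shortComplexKer hf) hA hB

lemma middle (hQ : IsThick Q) {f : A →ₗ[R] B} (hf : Function.Surjective f)
    (hK : Q (ModuleCat.of R (LinearMap.ker f))) (hB : Q (ModuleCat.of R B)) :
    Q (ModuleCat.of R A) :=
  hQ.X₂ (LinearMap.shortExact_shortComplexKer hf) hK hB

lemma coker (hQ : IsThick Q) {f : A →ₗ[R] B} (hf : Function.Surjective f)
    (hK : Q (ModuleCat.of R (LinearMap.ker f))) (hA : Q (ModuleCat.of R A)) :
    Q (ModuleCat.of R B) :=
  hQ.X₃ (LinearMap.shortExact_shortComplexKer hf) hK hA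

lemma of_subsingleton (hQ : IsThick Q) [Subsingleton A] (hB : Q (ModuleCat.of R B)) :
    Q (ModuleCat.of R A) :=
  hQ.of_retract 0 0 (fun _ => Subsingleton.elim _ _) hB

lemma pi (hQ : IsThick Q) (hR : Q (ModuleCat.of R R)) (n : ℕ) :
    Q (ModuleCat.of R (Fin n → R)) := by
  induction n with
  | zero => exact hQ.of_subsingleton hR
  | succ n ih =>
    have hs : Function.Surjective (LinearMap.proj 0 : (Fin (n + 1) → R) →ₗ[R] R) :=
      fun r => ⟨fun _ => r, rfl⟩
    refine hQ.middle hs (hQ.of_retract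
      ((LinearMap.funLeft R R Fin.succ).comp (Submodule.subtype _))
      (LinearMap.codRestrict _
        (LinearMap.pi (Fin.cases 0 fun i => LinearMap.proj i)) fun v => ?_) ?_ ih) hR
    · simp
    · rintro ⟨v, hv⟩
      ext i
      refine Fin.cases ?_ (fun i => ?_) i
      · simpa using hv.symm
      · simp [LinearMap.funLeft]

/-- The preimage of a thick class under restriction of scalars is thick. -/
lemma restrict (hQ : IsThick Q) {S : Type u} [CommRing S] (φ : R →+* S) :
    IsThick (R := S) (fun X => Q ((ModuleCat.restrictScalars.{u} φ).obj X)) where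
  retract r h := hQ.retract (r.map _) h
  X₁ hS h h' := hQ.X₁ (hS.map_of_exact (ModuleCat.restrictScalars.{u} φ)) h h'
  X₂ hS h h' := hQ.X₂ (hS.map_of_exact (ModuleCat.restrictScalars.{u} φ)) h h'
  X₃ hS h h' := hQ.X₃ (hS.map_of_exact (ModuleCat.restrictScalars.{u} φ)) h h'

end IsThick

/-- The class of modules `A` for which `Ext^i(A, N)` vanishes for `i ≫ 0`, with a bound that is
uniform in `N ∈ 𝒩`. Taking all modules for `𝒩` gives the modules of finite projective
dimension. -/
def ExtVanish {R : Type u} [CommRing R] (𝒩 : Set (ModuleCat.{u} R)) (A : ModuleCat.{u} R) : Prop :=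
  ∃ n : ℕ, ∀ i, n ≤ i → ∀ N ∈ 𝒩, Subsingleton (Abelian.Ext A N i)

lemma ExtVanish.isThick {R : Type u} [CommRing R] (𝒩 : Set (ModuleCat.{u} R)) :
    IsThick (ExtVanish 𝒩) where
  retract {X Y} r := fun ⟨n, h⟩ => ⟨n, fun i hi N hN => by
    have := h i hi N hN
    refine subsingleton_of_forall_eq 0 fun e => ?_
    have h1 : e = (Abelian.Ext.mk₀ r.i).comp ((Abelian.Ext.mk₀ r.r).comp e (zero_add i))
        (zero_add i) := by simp
    rw [h1, Subsingleton.elim ((Abelian.Ext.mk₀ r.r).comp e (zero_add i)) 0]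
    simp⟩
  X₁ {S} hS := fun ⟨n, h⟩ ⟨n', h'⟩ => ⟨max n n', fun i hi N hN => by
    have := h i (le_trans (le_max_left _ _) hi) N hN
    have := h' (1 + i) (by have := le_max_right n n'; lia) N hN
    refine subsingleton_of_forall_eq 0 fun e => ?_
    obtain ⟨y, rfl⟩ := Abelian.Ext.contravariant_sequence_exact₁ hS N e rfl (Subsingleton.elim _ _)
    rw [Subsingleton.elim y 0]; simp⟩
  X₂ {S} hS := fun ⟨n, h⟩ ⟨n', h'⟩ => ⟨max n n', fun i hi N hN => by
    have := h i (le_trans (le_max_left _ _) hi) N hN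
    have := h' i (le_trans (le_max_right _ _) hi) N hN
    refine subsingleton_of_forall_eq 0 fun e => ?_
    obtain ⟨y, rfl⟩ := Abelian.Ext.contravariant_sequence_exact₂ hS N e (Subsingleton.elim _ _)
    rw [Subsingleton.elim y 0]; simp⟩
  X₃ {S} hS := fun ⟨n, h⟩ ⟨n', h'⟩ => ⟨max n n' + 1, fun i hi N hN => by
    obtain ⟨j, rfl⟩ : ∃ j, i = 1 + j := ⟨i - 1, by lia⟩
    have := h j (by lia) N hN
    have := h' (1 + j) (by lia) N hN
    refine subsingleton_of_forall_eq 0 fun e => ?_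
    obtain ⟨y, rfl⟩ := Abelian.Ext.contravariant_sequence_exact₃ hS N e
      (Subsingleton.elim _ _) rfl
    rw [Subsingleton.elim y 0]; simp⟩

lemma ExtVanish.self {R : Type u} [CommRing R] (𝒩 : Set (ModuleCat.{u} R)) :
    ExtVanish 𝒩 (ModuleCat.of R R) := by
  refine ⟨1, fun i hi N _ => subsingleton_of_forall_eq 0 fun e => ?_⟩
  obtain ⟨j, rfl⟩ : ∃ j, i = j + 1 := ⟨i - 1, by lia⟩
  have : Projective (ModuleCat.of R R) := ModuleCat.projective_of_free (Module.Basis.singleton Unit R)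
  exact e.eq_zero_of_projective

lemma extVanish_univ_iff {R : Type u} [CommRing R] (A : ModuleCat.{u} R) :
    ExtVanish Set.univ A ↔ ∃ n, HasProjectiveDimensionLT A n := by
  refine exists_congr fun n => ?_
  rw [hasProjectiveDimensionLT_iff.{u}]
  exact ⟨fun h i hi Y e => (h i hi Y trivial).elim _ _,
    fun h i hi Y _ => subsingleton_of_forall_eq 0 fun e => h i hi e⟩

/-! ### Minimal covers -/

/-- A cover by a free module of minimal rank has all its relations in the maximal ideal: a relation
with a unit coordinate would make one of the generators redundant. -/
lemma exists_minimal_cover_s19 (R : Type u) [CommRing R] [IsLocalRing R]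
    (A : Type u) [AddCommGroup A] [Module R A] [Module.Finite R A] :
    ∃ (n : ℕ) (f : (Fin n → R) →ₗ[R] A), Function.Surjective f ∧
      ∀ v, f v = 0 → ∀ i, v i ∈ maximalIdeal R := by
  classical
  have hex : ∃ (n : ℕ) (f : (Fin n → R) →ₗ[R] A), Function.Surjective f :=
    Module.Finite.exists_fin' R A
  obtain ⟨f, hf⟩ := Nat.find_spec hex
  refine ⟨Nat.find hex, f, hf, fun v hv i => ?_⟩
  by_contra hi
  rw [mem_maximalIdeal, mem_nonunits_iff, not_not] at hi
  obtain ⟨c, hc⟩ := hi.exists_left_inv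
  have hmin : ∀ k < Nat.find hex, ¬ ∃ f : (Fin k → R) →ₗ[R] A, Function.Surjective f :=
    fun k hk => Nat.find_min hex hk
  generalize Nat.find hex = n at *
  cases n with
  | zero => exact i.elim0
  | succ k =>
    refine hmin k (Nat.lt_succ_self k) ⟨f.comp (LinearMap.pi
      (Fin.insertNth (α := fun _ => (Fin k → R) →ₗ[R] R) i 0 fun j => LinearMap.proj j)),
      fun a => ?_⟩
    obtain ⟨w, rfl⟩ := hf a
    refine ⟨fun j => (w - (w i * c) • v) (i.succAbove j), ?_⟩
    rw [LinearMap.comp_apply]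
    trans f (w - (w i * c) • v)
    · congr 1
      ext j
      rw [LinearMap.pi_apply]
      refine Fin.succAboveCases i ?_ (fun j => ?_) j
      · simp [mul_assoc, hc]
      · simp
    · simp [hv]

/-! ### Local rings with decomposable maximal ideal -/

/-! ### Decomposable maximal ideals -/

section Decomposable

variable {R : Type u} [CommRing R] [IsLocalRing R]

/-- The projections of `𝔪 = I ⊕ J` onto its two summands, as maps into `R`. -/
lemma exists_proj {I J : Ideal R} (hIJ : I ⊓ J = ⊥) (hm : I ⊔ J = maximalIdeal R) :
    ∃ p q : maximalIdeal R →ₗ[R] R, (∀ x, p x ∈ I) ∧ (∀ x, q x ∈ J) ∧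
      (∀ x, p x + q x = (x : R)) ∧
      (∀ x : maximalIdeal R, (x : R) ∈ I → p x = x ∧ q x = 0) ∧
      (∀ x : maximalIdeal R, (x : R) ∈ J → q x = x ∧ p x = 0) := by
  have huniq : ∀ {a a' b b' : R}, a ∈ I → a' ∈ I → b ∈ J → b' ∈ J → a + b = a' + b' →
      a = a' ∧ b = b' := by
    intro a a' b b' ha ha' hb hb' h
    have h1 : a - a' = b' - b := by linear_combination h
    have h2 : a - a' ∈ I ⊓ J := ⟨I.sub_mem ha ha', h1 ▸ J.sub_mem hb' hb⟩
    rw [hIJ, Ideal.mem_bot, sub_eq_zero] at h2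
    exact ⟨h2, by rw [h2] at h; exact add_left_cancel h⟩
  have hex : ∀ x : maximalIdeal R, ∃ a ∈ I, ∃ b ∈ J, a + b = (x : R) := fun x =>
    Submodule.mem_sup.mp (hm.ge x.2)
  choose p hp q hq hpq using hex
  have hadd : ∀ x y, p (x + y) = p x + p y ∧ q (x + y) = q x + q y := fun x y =>
    huniq (hp _) (I.add_mem (hp x) (hp y)) (hq _) (J.add_mem (hq x) (hq y)) (by
      rw [hpq, Submodule.coe_add, ← hpq x, ← hpq y]; ring)
  have hsmul : ∀ (r : R) x, p (r • x) = r * p x ∧ q (r • x) = r * q x := fun r x =>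
    huniq (hp _) (I.mul_mem_left r (hp x)) (hq _) (J.mul_mem_left r (hq x)) (by
      rw [hpq, Submodule.coe_smul, ← hpq x, smul_eq_mul]; ring)
  refine ⟨⟨⟨p, fun x y => (hadd x y).1⟩, fun r x => (hsmul r x).1⟩,
    ⟨⟨q, fun x y => (hadd x y).2⟩, fun r x => (hsmul r x).2⟩, hp, hq, hpq, fun x hx => ?_,
    fun x hx => ?_⟩
  · exact huniq (hp x) hx (hq x) J.zero_mem ((hpq x).trans (add_zero _).symm)
  · exact (huniq (hp x) I.zero_mem (hq x) hx ((hpq x).trans (zero_add _).symm)).symm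

/-- If a nonzero module killed by `J` lies in a thick class containing `R`, then so does `J`: it is
a direct summand of the first syzygy. -/
lemma IsThick.ideal_of_killed {Q : ModuleCat.{u} R → Prop} (hQ : IsThick Q)
    (hR : Q (ModuleCat.of R R)) {I J : Ideal R} (hIJ : I ⊓ J = ⊥) (hm : I ⊔ J = maximalIdeal R)
    (C : Type u) [AddCommGroup C] [Module R C] [Module.Finite R C] [Nontrivial C]
    (hC : ∀ j ∈ J, ∀ c : C, j • c = 0) (hQC : Q (ModuleCat.of R C)) :
    Q (ModuleCat.of R J) := by
  obtain ⟨n, f, hf, hmin⟩ := exists_minimal_cover_s19 R C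
  obtain ⟨p, q, -, hq, -, -, hqJ⟩ := exists_proj hIJ hm
  have hJ : J ≤ maximalIdeal R := hm ▸ le_sup_right
  obtain ⟨n, rfl⟩ : ∃ k, n = k + 1 := by
    cases n with
    | zero => exact absurd hf.subsingleton (not_subsingleton C)
    | succ k => exact ⟨k, rfl⟩
  refine hQ.of_retract
    (LinearMap.codRestrict _ ((LinearMap.single R (fun _ : Fin (n + 1) => R) 0).comp J.subtype)
      fun j => ?_)
    (LinearMap.codRestrict J (q.comp (LinearMap.codRestrict _
      ((LinearMap.proj 0).comp (LinearMap.ker f).subtype) fun v => hmin v.1 v.2 0)) fun v => hq _)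
    (fun j => ?_) (hQ.ker hf (hQ.pi hR _) hQC)
  · have : (Pi.single 0 (j : R) : Fin (n + 1) → R) = (j : R) • Pi.single 0 (1 : R) := by
      rw [← Pi.single_smul]; simp
    simp [this, hC j j.2]
  · ext
    have hj : ∀ w : maximalIdeal R, (w : R) = j → q w = j := fun w hw =>
      (hqJ w (hw ▸ j.2)).1.trans hw
    exact hj _ (Pi.single_eq_same (M := fun _ : Fin (n + 1) => R) 0 (j : R))

/-- If a nonzero module killed by `J` lies in a thick class containing `R`, so does the residue
field: both `J` and `I` lie in the class, the latter because `J` is killed by `I`. -/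
lemma IsThick.residue_of_killed {Q : ModuleCat.{u} R → Prop} (hQ : IsThick Q) [IsNoetherianRing R]
    (hR : Q (ModuleCat.of R R)) {I J : Ideal R} (hIJ : I ⊓ J = ⊥) (hm : I ⊔ J = maximalIdeal R)
    (hJ : J ≠ ⊥)
    (C : Type u) [AddCommGroup C] [Module R C] [Module.Finite R C] [Nontrivial C]
    (hC : ∀ j ∈ J, ∀ c : C, j • c = 0) (hQC : Q (ModuleCat.of R C)) :
    Q (ModuleCat.of R (R ⧸ maximalIdeal R)) := by
  have hQJ := hQ.ideal_of_killed hR hIJ hm C hC hQC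
  have : Nontrivial J := Submodule.nontrivial_iff_ne_bot.mpr hJ
  have hQI : Q (ModuleCat.of R I) := by
    refine hQ.ideal_of_killed hR (inf_comm J I ▸ hIJ) (sup_comm J I ▸ hm) J (fun i hi j => ?_) hQJ
    ext
    have : i * (j : R) ∈ I ⊓ J := ⟨I.mul_mem_right _ hi, J.mul_mem_left _ j.2⟩
    simpa [hIJ] using this
  obtain ⟨p, q, hp, hq, hpq, hpI, hqJ⟩ := exists_proj hIJ hm
  have hI' : I ≤ maximalIdeal R := hm ▸ le_sup_left
  have hJ' : J ≤ maximalIdeal R := hm ▸ le_sup_right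
  have hs : Function.Surjective (LinearMap.codRestrict J q hq) :=
    fun j => ⟨⟨j, hJ' j.2⟩, by ext; exact (hqJ _ j.2).1⟩
  have hker : ∀ x : LinearMap.ker (LinearMap.codRestrict J q hq), (x.1 : R) ∈ I := fun x => by
    have h0 : q x.1 = 0 := congrArg Subtype.val x.2
    have := hpq x.1
    rw [h0, add_zero] at this
    exact this ▸ hp x.1
  have hQm : Q (ModuleCat.of R (maximalIdeal R)) := by
    refine hQ.middle hs (hQ.of_retract
      (LinearMap.codRestrict I ((maximalIdeal R).subtype.comp (Submodule.subtype _)) hker)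
      (LinearMap.codRestrict _ (Submodule.inclusion hI') fun i => ?_) (fun _ => rfl) hQI) hQJ
    ext
    exact (hpI ⟨i, hI' i.2⟩ i.2).2
  refine hQ.coker (Submodule.mkQ_surjective (maximalIdeal R)) ?_ hR
  exact hQ.of_equiv (LinearEquiv.ofEq _ _ (Submodule.ker_mkQ _)) hQm

/-- Let `C` be the kernel of a minimal cover of a submodule `B` of a free module. Then `C` is the
direct sum of a module killed by `J` and a module killed by `I`; the summand is recorded here as
the image of an idempotent endomorphism. -/
lemma exists_syzygy_idempotent {I J : Ideal R} (hIJ : I ⊓ J = ⊥) (hm : I ⊔ J = maximalIdeal R)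
    {n m : ℕ} (φ : (Fin n → R) →ₗ[R] (Fin m → R))
    (hmin : ∀ v, φ v = 0 → ∀ i, v i ∈ maximalIdeal R) :
    ∃ e e' : LinearMap.ker φ →ₗ[R] LinearMap.ker φ, (∀ v, e v + e' v = v) ∧
      (∀ v, e (e v) = e v) ∧ (∀ v, e' (e' v) = e' v) ∧
      (∀ j ∈ J, ∀ v, j • e v = 0) ∧ (∀ i ∈ I, ∀ v, i • e' v = 0) := by
  obtain ⟨p, q, hp, hq, hpq, hpI, hqJ⟩ := exists_proj hIJ hm
  let c (i : Fin n) : LinearMap.ker φ →ₗ[R] maximalIdeal R :=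
    LinearMap.codRestrict _ ((LinearMap.proj i).comp (LinearMap.ker φ).subtype)
      fun v => hmin v.1 v.2 i
  let P : LinearMap.ker φ →ₗ[R] (Fin n → R) := LinearMap.pi fun i => p.comp (c i)
  let P' : LinearMap.ker φ →ₗ[R] (Fin n → R) := LinearMap.pi fun i => q.comp (c i)
  have hP : ∀ v i, P v i ∈ I := fun v i => hp _
  have hP' : ∀ v i, P' v i ∈ J := fun v i => hq _
  have hPP : ∀ v, P v + P' v = v := fun v => funext fun i => hpq (c i v)
  have hmul : ∀ (K : Ideal R) (w : Fin n → R), (∀ i, w i ∈ K) → ∀ k, φ w k ∈ K := by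
    intro K w hw k
    rw [← Finset.univ_sum_single w, map_sum, Finset.sum_apply]
    refine K.sum_mem fun i _ => ?_
    have : (Pi.single i (w i) : Fin n → R) = w i • Pi.single i (1 : R) := by
      rw [← Pi.single_smul]; simp
    simp only [this, map_smul, Pi.smul_apply, smul_eq_mul]
    exact K.mul_mem_right _ (hw i)
  -- `φ (P v)` has coordinates in `I`, and also in `J` as it equals `-φ (P' v)`.
  have hker : ∀ v, φ (P v) = 0 ∧ φ (P' v) = 0 := by
    intro v
    have hsum : φ (P v) + φ (P' v) = 0 := by rw [← map_add, hPP]; exact v.2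
    have h0 : φ (P v) = 0 := by
      ext k
      have h1 : φ (P v) k ∈ I ⊓ J := by
        refine ⟨hmul I _ (hP v) k, ?_⟩
        rw [eq_neg_of_add_eq_zero_left hsum]
        exact J.neg_mem (hmul J _ (hP' v) k)
      simpa [hIJ] using h1
    exact ⟨h0, by simpa [h0] using hsum⟩
  have hzero : ∀ {a b : R}, a ∈ I → b ∈ J → a * b = 0 := fun {a b} ha hb => by
    have : a * b ∈ I ⊓ J := ⟨I.mul_mem_right _ ha, J.mul_mem_left _ hb⟩
    simpa [hIJ] using this
  refine ⟨LinearMap.codRestrict _ P fun v => (hker v).1,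
    LinearMap.codRestrict _ P' fun v => (hker v).2, fun v => ?_, fun v => ?_, fun v => ?_,
    fun j hj v => ?_, fun i hi v => ?_⟩
  · ext1; exact hPP v
  · ext1; ext i; exact (hpI (c i ⟨P v, (hker v).1⟩) (hP v i)).1
  · ext1; ext i; exact (hqJ (c i ⟨P' v, (hker v).2⟩) (hP' v i)).1
  · ext1; ext i; exact (mul_comm _ _).trans (hzero (hP v i) hj)
  · ext1; ext k; exact hzero hi (hP' v k)

end Decomposable

/-- Every finitely generated module `A` either lies in the smallest thick class containing `R`, or
the smallest thick class containing `R` and `A` contains the residue field. -/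
def ThickDichotomy (R : Type u) [CommRing R] [IsLocalRing R] : Prop :=
  ∀ (A : Type u) [AddCommGroup A] [Module R A] [Module.Finite R A],
    (∀ Q : ModuleCat.{u} R → Prop, IsThick Q → Q (ModuleCat.of R R) → Q (ModuleCat.of R A)) ∨
    (∀ Q : ModuleCat.{u} R → Prop, IsThick Q → Q (ModuleCat.of R R) → Q (ModuleCat.of R A) →
      Q (ModuleCat.of R (R ⧸ maximalIdeal R)))

/-- The dichotomy holds when the maximal ideal is decomposable: a nonzero second syzygy has a
nonzero summand killed by `I` or by `J`. -/
lemma thickDichotomy_of_decomposable {R : Type u} [CommRing R] [IsNoetherianRing R] [IsLocalRing R]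
    {I J : Ideal R} (hIJ : I ⊓ J = ⊥) (hm : I ⊔ J = maximalIdeal R) (hI : I ≠ ⊥) (hJ : J ≠ ⊥) :
    ThickDichotomy R := by
  intro A _ _ _
  obtain ⟨m, f, hf⟩ := Module.Finite.exists_fin' R A
  obtain ⟨n, g, hg, hmin⟩ := exists_minimal_cover_s19 R (LinearMap.ker f)
  let φ : (Fin n → R) →ₗ[R] (Fin m → R) := (LinearMap.ker f).subtype.comp g
  have hφ : LinearMap.ker φ = LinearMap.ker g :=
    LinearMap.ker_comp_of_ker_eq_bot _ (Submodule.ker_subtype _)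
  by_cases hC : Subsingleton (LinearMap.ker g)
  · left
    intro Q hQ hR
    exact hQ.coker hf (hQ.coker hg (hQ.of_subsingleton hR) (hQ.pi hR n)) (hQ.pi hR m)
  · right
    intro Q hQ hR hA
    have hQC : Q (ModuleCat.of R (LinearMap.ker φ)) :=
      hQ.of_equiv (LinearEquiv.ofEq _ _ hφ) (hQ.ker hg (hQ.pi hR n) (hQ.ker hf (hQ.pi hR m) hA))
    obtain ⟨e, e', hsum, he, he', hk, hk'⟩ := exists_syzygy_idempotent hIJ hm φ
      fun v hv => hmin v (by rw [← LinearMap.mem_ker, ← hφ]; exact hv)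
    have key : ∀ (e : LinearMap.ker φ →ₗ[R] LinearMap.ker φ), (∀ v, e (e v) = e v) →
        Q (ModuleCat.of R (LinearMap.range e)) := fun e he => by
      refine hQ.of_retract (LinearMap.range e).subtype e.rangeRestrict ?_ hQC
      rintro ⟨_, v, rfl⟩
      ext1
      exact he v
    have hnt : ∀ (e : LinearMap.ker φ →ₗ[R] LinearMap.ker φ) v, e v ≠ 0 →
        Nontrivial (LinearMap.range e) := fun e v hv =>
      ⟨⟨e v, v, rfl⟩, 0, fun h => hv (congrArg Subtype.val h)⟩
    by_cases h0 : ∃ v, e v ≠ 0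
    · obtain ⟨v, hv⟩ := h0
      have := hnt e v hv
      refine hQ.residue_of_killed hR hIJ hm hJ (LinearMap.range e) ?_ (key e he)
      rintro j hj ⟨_, w, rfl⟩
      ext1
      exact hk j hj w
    · push Not at h0
      rw [not_subsingleton_iff_nontrivial, ← hφ] at hC
      obtain ⟨v, hv⟩ := exists_ne (0 : LinearMap.ker φ)
      have := hnt e' v (by have := hsum v; rw [h0, zero_add] at this; rwa [this])
      refine hQ.residue_of_killed hR (inf_comm J I ▸ hIJ) (sup_comm J I ▸ hm) hI
        (LinearMap.range e') ?_ (key e' he')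
      rintro i hi ⟨_, w, rfl⟩
      ext1
      exact hk' i hi w

/-! ### Passing from `R/(x)` to `R` -/

/-- Finitely generated modules of finite projective dimension lie in every thick class containing
the ring. -/
lemma IsThick.of_hasProjectiveDimensionLT {R : Type u} [CommRing R] [IsNoetherianRing R]
    {Q : ModuleCat.{u} R → Prop} (hQ : IsThick Q) (hR : Q (ModuleCat.of R R)) (n : ℕ) :
    ∀ (A : Type u) [AddCommGroup A] [Module R A] [Module.Finite R A],
      HasProjectiveDimensionLT (ModuleCat.of R A) n → Q (ModuleCat.of R A) := by
  induction n with
  | zero =>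
    intro A _ _ _ h
    have : Subsingleton A := ModuleCat.isZero_iff_subsingleton.mp
      ((hasProjectiveDimensionLT_zero_iff_isZero _).mp h)
    exact hQ.of_subsingleton hR
  | succ n ih =>
    intro A _ _ _ h
    obtain ⟨m, f, hf⟩ := Module.Finite.exists_fin' R A
    cases n with
    | zero =>
      have : Projective (ModuleCat.of R A) := projective_iff_hasProjectiveDimensionLT_one.mpr h
      have : Module.Projective R A := (IsProjective.iff_projective (R := R) A).mpr this
      obtain ⟨s, hs⟩ := Module.projective_lifting_property f LinearMap.id hf
      exact hQ.of_retract s f (fun a => LinearMap.congr_fun hs a) (hQ.pi hR m)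
    | succ n =>
      have hp : Projective (ModuleCat.of R (Fin m → R)) :=
        ModuleCat.projective_of_free (M := ModuleCat.of R (Fin m → R)) (Pi.basisFun R (Fin m))
      have := ((LinearMap.shortExact_shortComplexKer hf).hasProjectiveDimensionLT_X₃_iff n hp).mp h
      exact hQ.coker hf (ih _ this) (hQ.pi hR m)

/-- The dichotomy lifts along `R → R/(x)` for a regular element `x`: apply it to `B/xB`, where `B`
is a first syzygy of the given module. -/
lemma thickDichotomy_of_quotient {R : Type u} [CommRing R] [IsNoetherianRing R] [IsLocalRing R]
    {x : R} (hx : x ∈ maximalIdeal R) (hreg : IsSMulRegular R x)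
    [IsLocalRing (R ⧸ Ideal.span {x})] (h : ThickDichotomy (R ⧸ Ideal.span {x})) :
    ThickDichotomy R := by
  intro A _ _ _
  obtain ⟨m, f, hf⟩ := Module.Finite.exists_fin' R A
  have hB : IsSMulRegular (LinearMap.ker f) x := by
    intro v w hvw
    ext i
    exact hreg (congrFun (congrArg Subtype.val hvw) i)
  have hfin : Module.Finite (R ⧸ Ideal.span {x}) (QuotSMulTop x (LinearMap.ker f)) :=
    Module.Finite.of_restrictScalars_finite R _ _
  let φ : R →+* R ⧸ Ideal.span {x} := Ideal.Quotient.mk _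
  -- Restricting the `R/(x)`-module `B/xB` to `R` gives back the `R`-module `B/xB`.
  have e1 : ∀ Q : ModuleCat.{u} R → Prop, IsThick Q →
      (Q ((ModuleCat.restrictScalars.{u} φ).obj
        (ModuleCat.of (R ⧸ Ideal.span {x}) (QuotSMulTop x (LinearMap.ker f)))) ↔
      Q (ModuleCat.of R (QuotSMulTop x (LinearMap.ker f)))) := by
    intro Q hQ
    let e : QuotSMulTop x (LinearMap.ker f) ≃ₗ[R] ((ModuleCat.restrictScalars.{u} φ).obj
        (ModuleCat.of (R ⧸ Ideal.span {x}) (QuotSMulTop x (LinearMap.ker f)))) :=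
      { AddEquiv.refl _ with map_smul' := fun r b => rfl }
    exact ⟨hQ.of_equiv e, hQ.of_equiv e.symm⟩
  have e2 : ∀ Q : ModuleCat.{u} R → Prop, IsThick Q → Q (ModuleCat.of R R) →
      Q ((ModuleCat.restrictScalars.{u} φ).obj
        (ModuleCat.of (R ⧸ Ideal.span {x}) (R ⧸ Ideal.span {x}))) := by
    intro Q hQ hR
    let e : (R ⧸ Ideal.span {x}) ≃ₗ[R] ((ModuleCat.restrictScalars.{u} φ).obj
        (ModuleCat.of (R ⧸ Ideal.span {x}) (R ⧸ Ideal.span {x}))) :=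
      { AddEquiv.refl _ with map_smul' := fun r b => rfl }
    refine hQ.of_equiv (e.symm.trans (Submodule.quotEquivOfEq _ _ ?_))
      (hQ.X₃ (S := (ModuleCat.of R R).smulShortComplex x)
        (IsSMulRegular.smulShortComplex_shortExact hreg) hR hR)
    exact (Submodule.ideal_span_singleton_smul x ⊤).symm.trans (by simp) |>.symm
  have e3 : ∀ Q : ModuleCat.{u} R → Prop, IsThick Q →
      Q ((ModuleCat.restrictScalars.{u} φ).obj (ModuleCat.of (R ⧸ Ideal.span {x})
        ((R ⧸ Ideal.span {x}) ⧸ maximalIdeal (R ⧸ Ideal.span {x})))) →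
      Q (ModuleCat.of R (R ⧸ maximalIdeal R)) := by
    intro Q hQ hk
    let g : R →ₗ[R] ((ModuleCat.restrictScalars.{u} φ).obj (ModuleCat.of (R ⧸ Ideal.span {x})
        ((R ⧸ Ideal.span {x}) ⧸ maximalIdeal (R ⧸ Ideal.span {x})))) :=
      { toFun := fun r => Ideal.Quotient.mk (maximalIdeal (R ⧸ Ideal.span {x})) (φ r)
        map_add' := fun a b => by rw [map_add, map_add]; rfl
        map_smul' := fun a b => by rw [smul_eq_mul, map_mul, map_mul]; rfl }
    have hg : Function.Surjective g :=
      (Ideal.Quotient.mk_surjective (I := maximalIdeal (R ⧸ Ideal.span {x}))).comp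
        (Ideal.Quotient.mk_surjective (I := Ideal.span {x}))
    have hker : LinearMap.ker g = maximalIdeal R := by
      have : ((maximalIdeal (R ⧸ Ideal.span {x})).comap φ).IsMaximal :=
        Ideal.comap_isMaximal_of_surjective φ Ideal.Quotient.mk_surjective
      rw [← IsLocalRing.eq_maximalIdeal this]
      ext r
      exact Ideal.Quotient.eq_zero_iff_mem
    exact hQ.of_equiv ((Submodule.quotEquivOfEq _ _ hker.symm).trans
      (g.quotKerEquivOfSurjective hg)) hk
  rcases h (QuotSMulTop x (LinearMap.ker f)) with h | h
  · left
    intro Q hQ hR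
    have h1 := (e1 _ (ExtVanish.isThick Set.univ)).mp
      (h _ ((ExtVanish.isThick Set.univ).restrict φ)
        (e2 _ (ExtVanish.isThick Set.univ) (ExtVanish.self _)))
    obtain ⟨n, hn⟩ := (extVanish_univ_iff _).mp h1
    have hpd := ModuleCat.projectiveDimension_quotSMulTop_eq_succ_of_isSMulRegular
      (ModuleCat.of R (LinearMap.ker f)) x hB hx
    have h2 : ∃ n, HasProjectiveDimensionLT (ModuleCat.of R (LinearMap.ker f)) n := by
      refine ⟨n, ?_⟩
      rw [← projectiveDimension_lt_iff] at hn ⊢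
      rw [hpd] at hn
      exact lt_of_le_of_lt (le_add_of_nonneg_right zero_le_one) hn
    obtain ⟨n, h2⟩ := h2
    exact hQ.coker hf (hQ.of_hasProjectiveDimensionLT hR n _ h2) (hQ.pi hR m)
  · right
    intro Q hQ hR hA
    refine e3 Q hQ (h _ (hQ.restrict φ) (e2 Q hQ hR) ((e1 Q hQ).mpr ?_))
    have hQB := hQ.ker hf (hQ.pi hR m) hA
    exact hQ.X₃ (S := (ModuleCat.of R (LinearMap.ker f)).smulShortComplex x)
      (IsSMulRegular.smulShortComplex_shortExact hB) hQB hQB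

/-! ### Quasi-decomposable maximal ideals -/

/-- The dichotomy for quasi-decomposable maximal ideals, with the decomposition of `𝔪/(𝐱)`
expressed by ideals of `R`. -/
theorem thickDichotomy_of_ofList (n : ℕ) : ∀ (R : Type u) [CommRing R] [IsNoetherianRing R]
    [IsLocalRing R] (xs : List R), xs.length = n → (∀ a ∈ xs, a ∈ maximalIdeal R) →
    RingTheory.Sequence.IsWeaklyRegular R xs → ∀ I J : Ideal R, I ⊓ J = Ideal.ofList xs →
    I ⊔ J = maximalIdeal R → I ≠ Ideal.ofList xs → J ≠ Ideal.ofList xs → ThickDichotomy R := by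
  induction n with
  | zero =>
    intro R _ _ _ xs hlen _ _ I J hIJ hm hI hJ
    obtain rfl := List.length_eq_zero_iff.mp hlen
    rw [Ideal.ofList_nil] at hIJ hI hJ
    exact thickDichotomy_of_decomposable hIJ hm hI hJ
  | succ n ih =>
    intro R _ _ _ xs hlen hmem hreg I J hIJ hm hI hJ
    obtain _ | ⟨x, xs⟩ := xs
    · simp at hlen
    have hx : x ∈ maximalIdeal R := hmem x (by simp)
    rw [RingTheory.Sequence.isWeaklyRegular_cons_iff] at hreg
    have hne : Ideal.span {x} ≠ ⊤ :=
      ne_top_of_le_ne_top (Ideal.IsPrime.ne_top inferInstance)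
        ((Ideal.span_singleton_le_iff_mem (maximalIdeal R)).mpr hx)
    have : Nontrivial (R ⧸ Ideal.span {x}) := Ideal.Quotient.nontrivial_iff.mpr hne
    let φ : R →+* R ⧸ Ideal.span {x} := Ideal.Quotient.mk _
    have hφ : Function.Surjective φ := Ideal.Quotient.mk_surjective
    have : IsLocalRing (R ⧸ Ideal.span {x}) := IsLocalRing.of_surjective' φ hφ
    have hmax : (maximalIdeal (R ⧸ Ideal.span {x})).comap φ = maximalIdeal R :=
      IsLocalRing.eq_maximalIdeal (Ideal.comap_isMaximal_of_surjective φ hφ)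
    -- Ideals containing `x` are recovered from their images in `R/(x)`.
    have hcm : ∀ K : Ideal R, x ∈ K → (K.map φ).comap φ = K := fun K hK => by
      rw [Ideal.comap_map_of_surjective φ hφ, sup_eq_left, ← RingHom.ker_eq_comap_bot]
      rw [Ideal.mk_ker]
      exact (Ideal.span_singleton_le_iff_mem K).mpr hK
    have hxL : x ∈ Ideal.ofList (x :: xs) := Ideal.subset_span (by simp)
    have hxI : x ∈ I := (hIJ ▸ inf_le_left : Ideal.ofList (x :: xs) ≤ I) hxL
    have hxJ : x ∈ J := (hIJ ▸ inf_le_right : Ideal.ofList (x :: xs) ≤ J) hxL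
    have hL : (Ideal.ofList (x :: xs)).map φ = Ideal.ofList (xs.map φ) := by
      rw [Ideal.map_ofList, List.map_cons, Ideal.ofList_cons]
      have : φ x = 0 := Ideal.Quotient.eq_zero_iff_mem.mpr (Ideal.mem_span_singleton_self x)
      rw [this]
      simp
    have hLc : (Ideal.ofList (xs.map φ)).comap φ = Ideal.ofList (x :: xs) := by
      rw [← hL, hcm _ hxL]
    have hinj := Ideal.comap_injective_of_surjective φ hφ
    refine thickDichotomy_of_quotient hx hreg.1 (ih _ (xs.map φ) (by simpa using hlen) ?_ ?_
      (I.map φ) (J.map φ) (hinj ?_) ?_ (fun h => hI ?_) (fun h => hJ ?_))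
    · intro a ha
      obtain ⟨b, hb, rfl⟩ := List.mem_map.mp ha
      rw [← Ideal.mem_comap, hmax]
      exact hmem b (by simp [hb])
    · have e : QuotSMulTop x R ≃ₗ[R] R ⧸ Ideal.span {x} :=
        Submodule.quotEquivOfEq _ _
          ((Submodule.ideal_span_singleton_smul x ⊤).symm.trans (by simp))
      exact (RingTheory.Sequence.isWeaklyRegular_map_algebraMap_iff (R ⧸ Ideal.span {x})
        (R ⧸ Ideal.span {x}) xs).mpr ((LinearEquiv.isWeaklyRegular_congr e xs).mp hreg.2)
    · rw [Ideal.comap_inf, hcm I hxI, hcm J hxJ, hLc, hIJ]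
    · rw [← Ideal.map_sup, hm, ← hmax, Ideal.map_comap_of_surjective φ hφ]
    · rw [← hLc, ← h, hcm I hxI]
    · rw [← hLc, ← h, hcm J hxJ]

lemma HasQuasiDecomposableMaxIdeal.thickDichotomy {R : Type u} [CommRing R] [IsNoetherianRing R]
    [IsLocalRing R] (h : HasQuasiDecomposableMaxIdeal R) : ThickDichotomy R := by
  obtain ⟨xs, hmem, hreg, N₁, N₂, h₁, h₂, hinf, hsup⟩ := h
  let φ : R →+* R ⧸ Ideal.ofList xs := Ideal.Quotient.mk _
  have hφ : Function.Surjective φ := Ideal.Quotient.mk_surjective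
  let n := (maximalIdeal R).map φ
  have hinj := Ideal.comap_injective_of_surjective φ hφ
  have hle : Ideal.ofList xs ≤ maximalIdeal R := Ideal.span_le.mpr hmem
  have hker : (⊥ : Ideal (R ⧸ Ideal.ofList xs)).comap φ = Ideal.ofList xs := by
    rw [← RingHom.ker_eq_comap_bot, Ideal.mk_ker]
  have hcm : ∀ K : Ideal R, Ideal.ofList xs ≤ K → (K.map φ).comap φ = K := fun K hK =>
    (Ideal.comap_map_of_surjective φ hφ K).trans (sup_eq_left.mpr (hker.le.trans hK))
  have hge : ∀ K' : Ideal (R ⧸ Ideal.ofList xs), Ideal.ofList xs ≤ K'.comap φ :=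
    fun K' => hker.ge.trans (Ideal.comap_mono bot_le)
  have hminj : Function.Injective (Submodule.map n.subtype) :=
    Submodule.map_injective_of_injective n.injective_subtype
  refine thickDichotomy_of_ofList _ R xs rfl hmem hreg.1 (Ideal.comap φ (N₁.map n.subtype))
    (Ideal.comap φ (N₂.map n.subtype)) ?_ ?_ ?_ ?_
  · rw [← Ideal.comap_inf, ← Submodule.map_inf _ n.injective_subtype, hinf, Submodule.map_bot, hker]
  · rw [← hcm (_ ⊔ _) ((hge _).trans le_sup_left), Ideal.map_sup,
      Ideal.map_comap_of_surjective φ hφ, Ideal.map_comap_of_surjective φ hφ,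
      ← Submodule.map_sup, hsup, Submodule.map_top, Submodule.range_subtype]
    exact hcm _ hle
  · exact fun h => h₁ (hminj ((hinj (h.trans hker.symm)).trans (Submodule.map_bot _).symm))
  · exact fun h => h₂ (hminj ((hinj (h.trans hker.symm)).trans (Submodule.map_bot _).symm))

/-! ### Comparison of the two `Ext` groups -/

/-- Vanishing of the derived-functor `Ext` gives vanishing of `Abelian.Ext`: both are computed by a
projective resolution of `X`. -/
lemma subsingleton_ext_of_subsingleton {R : Type u} [CommRing R] (X Y : ModuleCat.{u} R) (p : ℕ)
    (h : Subsingleton (((Ext R (ModuleCat.{u} R) (p + 1)).obj (Opposite.op X)).obj Y)) :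
    Subsingleton (Abelian.Ext X Y (p + 1)) := by
  let P := projectiveResolution X
  have h0 : Limits.IsZero ((P.complex.linearYonedaObj R Y).homology (p + 1)) :=
    (ModuleCat.isZero_of_subsingleton _).of_iso (P.isoExt (p + 1) Y).symm
  have hex := (HomologicalComplex.exactAt_iff_isZero_homology _ _).mpr h0
  rw [HomologicalComplex.exactAt_iff' _ p (p + 1) (p + 2) (by simp) (by simp),
    ShortComplex.moduleCat_exact_iff] at hex
  refine subsingleton_of_forall_eq 0 fun e => ?_
  obtain ⟨f, hf, rfl⟩ := P.extMk_surjective e (p + 2) rfl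
  rw [P.extMk_eq_zero_iff f (p + 2) rfl hf p rfl]
  obtain ⟨g, hg⟩ := hex f (by exact hf)
  exact ⟨g, hg⟩

/-! ### Vanishing of `Ext` against the residue field and injective dimension -/

/-- If `Ext^i(R/𝔪, N)` vanishes for `i ≥ n`, so does `Ext^i(A, N)` for every finitely generated `A`:
by noetherian induction on an ideal killing `A` and a prime filtration, the claim reduces to
`A = R/𝔭`, where an element `y ∈ 𝔪 ∖ 𝔭` acts on `Ext^i(R/𝔭, N)` surjectively because
`Ext^{i+1}(R/(𝔭 + (y)), N)` vanishes, so that Nakayama's lemma applies. -/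
lemma subsingleton_ext_of_residue {R : Type u} [CommRing R] [IsNoetherianRing R] [IsLocalRing R]
    (N : ModuleCat.{u} R) [Module.Finite R N] {n : ℕ}
    (h : ∀ i ≥ n, Subsingleton (Abelian.Ext (ModuleCat.of R (R ⧸ maximalIdeal R)) N i))
    (𝔞 : Ideal R) : ∀ (A : Type u) [AddCommGroup A] [Module R A] [Module.Finite R A],
    (∀ a ∈ 𝔞, ∀ x : A, a • x = 0) → ∀ i ≥ n, Subsingleton (Abelian.Ext (ModuleCat.of R A) N i) := by
  induction 𝔞 using IsNoetherian.induction with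
  | hgt 𝔞 ih =>
  have congr : ∀ {A B : Type u} [AddCommGroup A] [Module R A] [AddCommGroup B] [Module R B]
      (_ : A ≃ₗ[R] B) (i : ℕ), Subsingleton (Abelian.Ext (ModuleCat.of R B) N i) →
      Subsingleton (Abelian.Ext (ModuleCat.of R A) N i) := by
    intro A B _ _ _ _ e i hB
    refine subsingleton_of_forall_eq 0 fun z => ?_
    have hz : (Abelian.Ext.mk₀ e.toModuleIso.hom).comp
        ((Abelian.Ext.mk₀ e.toModuleIso.inv).comp z (zero_add i)) (zero_add i) = z := by
      rw [Abelian.Ext.mk₀_comp_mk₀_assoc, Iso.hom_inv_id, Abelian.Ext.mk₀_id_comp]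
    rw [← hz, hB.elim (Abelian.Ext.comp _ z (zero_add i)) 0, Abelian.Ext.comp_zero]
  intro A _ _ hA
  induction hA using IsNoetherianRing.induction_on_isQuotientEquivQuotientPrime R with
  | subsingleton A =>
    intro _ i _
    refine subsingleton_of_forall_eq 0 fun e => ?_
    rw [← Abelian.Ext.mk₀_id_comp e,
      (ModuleCat.isZero_of_subsingleton (ModuleCat.of R A)).eq_of_src (𝟙 _) 0]
    simp
  | exact A₁ A₂ A₃ f g hf hg hfg h₁ h₃ =>
    intro hk i hi
    have := h₁ (fun a ha x => hf (by simp [hk a ha])) i hi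
    have := h₃ (fun a ha x => by obtain ⟨y, rfl⟩ := hg x; rw [← map_smul, hk a ha, map_zero]) i hi
    let S : ShortComplex (ModuleCat.{u} R) :=
      ModuleCat.shortComplexOfCompEqZero f g hfg.linearMap_comp_eq_zero
    have hS : S.ShortExact := ModuleCat.shortComplex_shortExact S hfg hf hg
    refine subsingleton_of_forall_eq 0 fun e => ?_
    obtain ⟨y, rfl⟩ := Abelian.Ext.contravariant_sequence_exact₂ hS N e
      (Subsingleton.elim (α := Abelian.Ext (ModuleCat.of R A₁) N i) _ _)
    rw [Subsingleton.elim (α := Abelian.Ext (ModuleCat.of R A₃) N i) y 0]; simp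
  | quotient A p e =>
    intro hk i hi
    have hle : 𝔞 ≤ p.1 := fun a ha => by
      have := hk a ha (e.symm (Ideal.Quotient.mk _ 1))
      rw [← map_smul, e.symm.map_eq_zero_iff] at this
      rw [← Ideal.Quotient.eq_zero_iff_mem, ← this, Algebra.smul_def, map_one, mul_one]
      rfl
    have hkp : ∀ a ∈ p.1, ∀ x : R ⧸ p.1, a • x = 0 := by
      intro a ha x
      obtain ⟨r, rfl⟩ := Ideal.Quotient.mk_surjective x
      exact Ideal.Quotient.eq_zero_iff_mem.mpr (Ideal.mul_mem_right _ _ ha)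
    refine congr e i ?_
    obtain hlt | rfl := hle.lt_or_eq
    · exact ih p.1 hlt (R ⧸ p.1) hkp i hi
    by_cases hmax : p.1 = maximalIdeal R
    · rw [hmax]; exact h i hi
    obtain ⟨y, hy, hyp⟩ := SetLike.exists_of_lt
      (lt_of_le_of_ne (IsLocalRing.le_maximalIdeal p.2.ne_top) hmax)
    let X := ModuleCat.of R (R ⧸ p.1)
    have reg : IsSMulRegular X y := by
      refine isSMulRegular_iff_right_eq_zero_of_smul.mpr fun x hx => ?_
      obtain ⟨r, rfl⟩ := Ideal.Quotient.mk_surjective x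
      have hx : y * r ∈ p.1 := Ideal.Quotient.eq_zero_iff_mem.mp hx
      exact Ideal.Quotient.eq_zero_iff_mem.mpr ((p.2.mem_or_mem hx).resolve_left hyp)
    have hS := reg.smulShortComplex_shortExact
    have zero : Subsingleton (Abelian.Ext (ModuleCat.of R (QuotSMulTop y X)) N (i + 1)) := by
      refine ih (p.1 ⊔ Ideal.span {y}) (left_lt_sup.mpr fun h => hyp
        (h (Ideal.mem_span_singleton_self y))) _ (fun a ha => ?_) (i + 1) (by lia)
      suffices p.1 ⊔ Ideal.span {y} ≤ Module.annihilator R (QuotSMulTop y X) from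
        Module.mem_annihilator.mp (this ha)
      refine sup_le (fun b hb => Module.mem_annihilator.mpr fun x => ?_)
        ((Ideal.span_singleton_le_iff_mem _).mpr (QuotSMulTop.mem_annihilator _ y))
      obtain ⟨x, rfl⟩ := Submodule.mkQ_surjective _ x
      rw [← map_smul]
      exact (congrArg _ (hkp b hb x)).trans (map_zero _)
    by_contra! ntr
    have : y ∈ (Module.annihilator R (Abelian.Ext X N i)).jacobson :=
      (IsLocalRing.maximalIdeal_le_jacobson _) hy
    absurd Submodule.top_ne_pointwise_smul_of_mem_jacobson_annihilator this
    rw [eq_comm, eq_top_iff]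
    intro z hz
    obtain ⟨w, hw⟩ := Abelian.Ext.contravariant_sequence_exact₁ hS N z (add_comm 1 i)
      (zero.elim _ _)
    have hw' : y • (show Abelian.Ext X N i from w) = z := by
      refine Eq.trans ?_ hw
      change _ = (Abelian.Ext.mk₀ (y • 𝟙 X)).comp (show Abelian.Ext X N i from w) (zero_add i)
      rw [Abelian.Ext.mk₀_smul, Abelian.Ext.smul_comp, Abelian.Ext.mk₀_id_comp]
    rw [← hw']
    exact Submodule.smul_mem_pointwise_smul _ _ ⊤ trivial

/-- Injective dimension is detected by a single `Ext` against cyclic modules: Baer's criterion when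
`n = 0`, and dimension shifting in general. -/
lemma hasInjectiveDimensionLT_of_ext_quotient {R : Type u} [CommRing R] (n : ℕ) :
    ∀ N : ModuleCat.{u} R,
    (∀ 𝔞 : Ideal R, Subsingleton (Abelian.Ext (ModuleCat.of R (R ⧸ 𝔞)) N (n + 1))) →
    HasInjectiveDimensionLT N (n + 1) := by
  induction n with
  | zero =>
    intro N h
    rw [zero_add, ← injective_iff_hasInjectiveDimensionLT_one,
      ← Module.injective_iff_injective_object R N, ← Module.Baer.iff_injective]
    intro 𝔞 g
    let S : ShortComplex (ModuleCat.{u} R) :=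
      ModuleCat.shortComplexOfCompEqZero 𝔞.subtype 𝔞.mkQ
        (LinearMap.exact_subtype_mkQ 𝔞).linearMap_comp_eq_zero
    have hS : S.ShortExact := ModuleCat.shortComplex_shortExact S
      (LinearMap.exact_subtype_mkQ 𝔞) 𝔞.injective_subtype 𝔞.mkQ_surjective
    obtain ⟨y, hy⟩ := Abelian.Ext.contravariant_sequence_exact₁ hS N
      (Abelian.Ext.mk₀ (ModuleCat.ofHom g)) (add_zero 1)
      ((h 𝔞).elim _ _)
    obtain ⟨y, rfl⟩ := (Abelian.Ext.mk₀_bijective _ _).2 y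
    rw [Abelian.Ext.mk₀_comp_mk₀] at hy
    have hy := (Abelian.Ext.mk₀_bijective _ _).1 hy
    exact ⟨y.hom, fun x hx => congrArg (fun f => f.hom ⟨x, hx⟩) hy⟩
  | succ n ih =>
    intro N h
    let ⟨I, _, f, _⟩ := EnoughInjectives.presentation N
    have injf : Function.Injective f.hom := (ModuleCat.mono_iff_injective f).mp ‹_›
    let S : ShortComplex (ModuleCat.{u} R) :=
      ModuleCat.shortComplexOfCompEqZero _ _ f.hom.exact_map_mkQ_range.linearMap_comp_eq_zero
    have hS : S.ShortExact := ModuleCat.shortComplex_shortExact S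
      f.hom.exact_map_mkQ_range injf (Submodule.mkQ_surjective _)
    refine (hS.hasInjectiveDimensionLT_X₃_iff n inferInstance).mp (ih _ fun 𝔞 => ?_)
    refine subsingleton_of_forall_eq 0 fun e => ?_
    obtain ⟨y, rfl⟩ := Abelian.Ext.covariant_sequence_exact₃ _ hS e rfl ((h 𝔞).elim _ _)
    rw [y.eq_zero_of_injective]
    simp

namespace FiniteInjectiveResolution

variable {R : Type u} [CommRing R]

/-- The trivial resolution of the zero module. -/
noncomputable def zero (N : Type u) [AddCommGroup N] [Module R N] [Subsingleton N] :
    FiniteInjectiveResolution R N where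
  len := 0
  ob _ := ModuleCat.of R PUnit
  injective _ := ⟨fun _ _ _ _ _ _ _ _ _ => ⟨0, fun _ => Subsingleton.elim _ _⟩⟩
  aug := 0
  d _ := 0
  aug_injective := Function.injective_of_subsingleton _
  exact_aug := Subsingleton.elim _ _
  exact _ := Subsingleton.elim _ _
  bounded _ _ := inferInstanceAs (Subsingleton PUnit)

/-- Splicing of an embedding `f : N → E` into an injective module with a finite injective
resolution of the cokernel. -/
noncomputable def cons {N : Type u} [AddCommGroup N] [Module R N] (E : ModuleCat.{u} R)
    (hE : Module.Injective R E) (f : N →ₗ[R] E) (hf : Function.Injective f)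
    (F : FiniteInjectiveResolution R (E ⧸ LinearMap.range f)) : FiniteInjectiveResolution R N where
  len := F.len + 1
  ob
    | 0 => E
    | i + 1 => F.ob i
  injective
    | 0 => hE
    | i + 1 => F.injective i
  aug := f
  d
    | 0 => F.aug ∘ₗ (LinearMap.range f).mkQ
    | i + 1 => F.d i
  aug_injective := hf
  exact_aug := by
    change LinearMap.ker (F.aug ∘ₗ (LinearMap.range f).mkQ) = _
    rw [LinearMap.ker_comp_of_ker_eq_bot _ (LinearMap.ker_eq_bot.mpr F.aug_injective),
      Submodule.ker_mkQ]
  exact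
    | 0 => by
      change LinearMap.ker (F.d 0) = LinearMap.range (F.aug ∘ₗ (LinearMap.range f).mkQ)
      rw [LinearMap.range_comp_of_range_eq_top _ (Submodule.range_mkQ _), F.exact_aug]
    | i + 1 => F.exact i
  bounded
    | 0, h => absurd h (by lia)
    | i + 1, h => F.bounded i (by lia)

end FiniteInjectiveResolution

lemma nonempty_finiteInjectiveResolution {R : Type u} [CommRing R] (n : ℕ) :
    ∀ (N : Type u) [AddCommGroup N] [Module R N],
    HasInjectiveDimensionLT (ModuleCat.of R N) n → Nonempty (FiniteInjectiveResolution R N) := by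
  induction n with
  | zero =>
    intro N _ _ h
    have : Subsingleton N := ModuleCat.isZero_iff_subsingleton.mp
      ((hasInjectiveDimensionLT_zero_iff_isZero _).mp h)
    exact ⟨.zero N⟩
  | succ n ih =>
    intro N _ _ h
    obtain _ | n := n
    · have : Injective (ModuleCat.of R N) := injective_iff_hasInjectiveDimensionLT_one.mpr h
      refine ⟨.cons (ModuleCat.of R N) ((Module.injective_iff_injective_object R _).mpr this)
        LinearMap.id Function.injective_id ?_⟩
      have : Subsingleton (N ⧸ LinearMap.range (LinearMap.id : N →ₗ[R] N)) :=
        Submodule.Quotient.subsingleton_iff.mpr LinearMap.range_id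
      exact .zero _
    · let ⟨I, hI, f, _⟩ := EnoughInjectives.presentation (ModuleCat.of R N)
      have injf : Function.Injective f.hom := (ModuleCat.mono_iff_injective f).mp ‹_›
      let S : ShortComplex (ModuleCat.{u} R) :=
        ModuleCat.shortComplexOfCompEqZero _ _ f.hom.exact_map_mkQ_range.linearMap_comp_eq_zero
      have hS : S.ShortExact := ModuleCat.shortComplex_shortExact S
        f.hom.exact_map_mkQ_range injf (Submodule.mkQ_surjective _)
      obtain ⟨F⟩ := ih (I ⧸ LinearMap.range f.hom)
        ((hS.hasInjectiveDimensionLT_X₃_iff n inferInstance).mpr h)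
      exact ⟨.cons I ((Module.injective_iff_injective_object R _).mpr hI) f.hom injf F⟩

/-! ### Projective dimension and minimal free resolutions -/

namespace MinimalFreeResolution

variable {R : Type u} [CommRing R] [IsLocalRing R]

/-- The trivial resolution of the zero module. -/
noncomputable def zero (M : Type u) [AddCommGroup M] [Module R M] [Subsingleton M] :
    MinimalFreeResolution R M where
  rank _ := 0
  aug := 0
  d _ := 0
  aug_surjective := Function.surjective_to_subsingleton _
  exact_aug := Subsingleton.elim _ _
  exact _ := Subsingleton.elim _ _
  minimal _ := (Subsingleton.elim _ _ : (_ : Submodule R (Fin 0 → R)) = _).le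

/-- Splicing of a minimal free cover `f : R^r → M` with a minimal free resolution of its kernel. -/
noncomputable def cons {M : Type u} [AddCommGroup M] [Module R M] {r : ℕ}
    (f : (Fin r → R) →ₗ[R] M) (hf : Function.Surjective f)
    (hmin : LinearMap.ker f ≤ maximalIdeal R • (⊤ : Submodule R (Fin r → R)))
    (F : MinimalFreeResolution R (LinearMap.ker f)) : MinimalFreeResolution R M where
  rank
    | 0 => r
    | i + 1 => F.rank i
  aug := f
  d
    | 0 => (LinearMap.ker f).subtype ∘ₗ F.aug
    | i + 1 => F.d i
  aug_surjective := hf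
  exact_aug := by
    change _ = LinearMap.range ((LinearMap.ker f).subtype ∘ₗ F.aug)
    rw [LinearMap.range_comp_of_range_eq_top _ (LinearMap.range_eq_top.mpr F.aug_surjective),
      Submodule.range_subtype]
  exact
    | 0 => by
      change LinearMap.ker ((LinearMap.ker f).subtype ∘ₗ F.aug) = LinearMap.range (F.d 0)
      rw [LinearMap.ker_comp_of_ker_eq_bot _ (Submodule.ker_subtype _), F.exact_aug]
    | i + 1 => F.exact i
  minimal
    | 0 => by
      refine le_trans ?_ hmin
      rintro _ ⟨v, rfl⟩
      exact (F.aug v).2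
    | i + 1 => F.minimal i

end MinimalFreeResolution

lemma exists_minimalFreeResolution {R : Type u} [CommRing R] [IsNoetherianRing R] [IsLocalRing R]
    (n : ℕ) : ∀ (M : Type u) [AddCommGroup M] [Module R M] [Module.Finite R M],
    HasProjectiveDimensionLT (ModuleCat.of R M) n →
    ∃ F : MinimalFreeResolution R M, ∀ i ≥ n, F.rank i = 0 := by
  induction n with
  | zero =>
    intro M _ _ _ h
    have : Subsingleton M := ModuleCat.isZero_iff_subsingleton.mp
      ((hasProjectiveDimensionLT_zero_iff_isZero _).mp h)
    exact ⟨.zero M, fun _ _ => rfl⟩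
  | succ n ih =>
    intro M _ _ _ h
    obtain ⟨r, f, hf, hmin⟩ := exists_minimal_cover_s19 R M
    have hmin' : LinearMap.ker f ≤ maximalIdeal R • (⊤ : Submodule R (Fin r → R)) := by
      intro v hv
      rw [← Finset.univ_sum_single v]
      refine Submodule.sum_mem _ fun i _ => ?_
      have : Pi.single i (v i) = v i • (Pi.single i 1 : Fin r → R) := by
        rw [← Pi.single_smul, smul_eq_mul, mul_one]
      rw [this]
      exact Submodule.smul_mem_smul (hmin v hv i) trivial
    have hK : HasProjectiveDimensionLT (ModuleCat.of R (LinearMap.ker f)) n := by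
      obtain _ | n := n
      · -- The cover of a projective module splits, so its kernel `K` is a summand of `R^r` lying
        -- in `𝔪 R^r`; hence `K = 𝔪 K`.
        have := (IsProjective.iff_projective (R := R) M).mpr
          (projective_iff_hasProjectiveDimensionLT_one.mpr h)
        obtain ⟨s, hs⟩ := Module.projective_lifting_property f LinearMap.id hf
        have hs' : ∀ m, f (s m) = m := fun m => LinearMap.congr_fun hs m
        let π : (Fin r → R) →ₗ[R] LinearMap.ker f :=
          (LinearMap.id - s ∘ₗ f).codRestrict _ (fun v => by simp [hs'])
        have hle : (⊤ : Submodule R (LinearMap.ker f)) ≤ maximalIdeal R • ⊤ := by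
          intro v _
          have hv : π v.1 = v := Subtype.ext (by simp [π])
          rw [← hv]
          have := Submodule.mem_map_of_mem (f := π) (hmin' v.2)
          rw [Submodule.map_smul''] at this
          exact Submodule.smul_mono le_rfl le_top this
        have : (⊤ : Submodule R (LinearMap.ker f)) = ⊥ :=
          Submodule.eq_bot_of_le_smul_of_le_jacobson_bot _ _ (IsNoetherian.noetherian _) hle
            (IsLocalRing.maximalIdeal_le_jacobson _)
        have : Subsingleton (LinearMap.ker f) := (Submodule.subsingleton_iff R).mp
          (subsingleton_of_bot_eq_top this.symm)
        exact (hasProjectiveDimensionLT_zero_iff_isZero _).mpr (ModuleCat.isZero_of_subsingleton _)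
      · have hex : Function.Exact (LinearMap.ker f).subtype f := LinearMap.exact_subtype_ker_map f
        let S : ShortComplex (ModuleCat.{u} R) :=
          ModuleCat.shortComplexOfCompEqZero (LinearMap.ker f).subtype f hex.linearMap_comp_eq_zero
        have hS : S.ShortExact := ModuleCat.shortComplex_shortExact S hex
          (Submodule.injective_subtype _) hf
        have : Projective S.X₂ := ModuleCat.projective_of_free (Pi.basisFun R (Fin r))
        exact (hS.hasProjectiveDimensionLT_X₃_iff n this).mp h
    obtain ⟨F, hF⟩ := ih _ hK
    refine ⟨.cons f hf hmin' F, fun i hi => ?_⟩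
    obtain ⟨i, rfl⟩ : ∃ j, i = j + 1 := ⟨i - 1, by lia⟩
    exact hF i (by lia)

/-- **Corollary 7.6.** Let `R` be a local ring with quasi-decomposable maximal ideal and let
`M`, `N` be finitely generated `R`-modules with `Ext_R^i(M, N) = 0` for all `i ≫ 0`. Then
`pd_R M < ∞` or `id_R N < ∞`. -/
theorem finite_projDim_or_finite_injDim_of_ext_vanishing
    (R : Type u) [CommRing R] [IsNoetherianRing R] [IsLocalRing R]
    (hqd : HasQuasiDecomposableMaxIdeal R)
    (M N : Type u) [AddCommGroup M] [Module R M] [Module.Finite R M]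
    [AddCommGroup N] [Module R N] [Module.Finite R N]
    (hext : ∃ i₀ : ℕ, ∀ i, i₀ ≤ i → Subsingleton
      (((Ext R (ModuleCat.{u} R) i).obj (Opposite.op (ModuleCat.of R M))).obj
        (ModuleCat.of R N))) :
    (∃ n : ℕ, ProjDimLE R M n) ∨ Nonempty (FiniteInjectiveResolution R N) := by
  obtain h | h := hqd.thickDichotomy M
  · obtain ⟨n, hn⟩ := (extVanish_univ_iff _).mp
      (h _ (ExtVanish.isThick Set.univ) (ExtVanish.self _))
    obtain ⟨F, hF⟩ := exists_minimalFreeResolution n M hn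
    exact Or.inl ⟨n, F, fun i hi => hF i hi.le⟩
  · right
    have hM : ExtVanish {ModuleCat.of R N} (ModuleCat.of R M) := by
      obtain ⟨i₀, hi₀⟩ := hext
      refine ⟨i₀ + 1, fun i hi N' hN' => ?_⟩
      obtain rfl := hN'
      obtain ⟨j, rfl⟩ : ∃ j, i = j + 1 := ⟨i - 1, by lia⟩
      exact subsingleton_ext_of_subsingleton _ _ j (hi₀ (j + 1) (by lia))
    obtain ⟨n, hn⟩ := h _ (ExtVanish.isThick _) (ExtVanish.self _) hM
    refine nonempty_finiteInjectiveResolution (n + 1) N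
      (hasInjectiveDimensionLT_of_ext_quotient n _ fun 𝔞 => ?_)
    exact subsingleton_ext_of_residue (ModuleCat.of R N) (fun i hi => hn i hi _ rfl) ⊥ (R ⧸ 𝔞)
      (fun a ha x => by rw [(Submodule.mem_bot R).mp ha, zero_smul]) (n + 1) (by lia)
end
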